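/- With θ = 0.8234, for every n ≥ 1, every w ∈ W, every x ∈ [0,1], and every e ∈ {−1,1} one has |F_n^w(x,e) − F(x,e)| ≤ θ^n. -/

import Mathlib

open Real MeasureTheory Filter Set
open scoped ENNReal NNReal Classical

namespace OCF

/-- The golden ratio `G = (1+√5)/2`. -/
noncomputable def G : ℝ := (1 + Real.sqrt 5) / 2

/-- `g = (√5-1)/2`. -/
noncomputable def gg : ℝ := (Real.sqrt 5 - 1) / 2

/-- The map `u : W × X → W` of the RSCC; `uF w e i = u(w,(e,i))`. -/
noncomputable def uF (w : ℝ) (e i : ℤ) : ℝ :=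
  if e = 1 then 1 / (i + w)
  else if w < gg ^ 2 then 1 / (i - w) else 1 / (i - gg ^ 2)

/-- The probabilities `P : W × X → [0,∞)` of the RSCC; `PF w e i = P(w,(e,i))`. -/
noncomputable def PF (w : ℝ) (e i : ℤ) : ℝ :=
  if w < gg ^ 2 then
    (1 - w ^ 2) * (2 - (if i = 1 then 1 else 0)) /
      (2 * ((i : ℝ) - 1 + (if i = 1 then 1 else 0) + (e : ℝ) * w) * ((i : ℝ) + 1 + (e : ℝ) * w))
  else
    (1 + w) * (2 - (if i = 1 then 1 else 0)) * (if e = 1 then 1 else 0) /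
      (((i : ℝ) - 1 + (if i = 1 then 1 else 0) + w) * ((i : ℝ) + 1 + w))

/-- The transition probability function
`Q(w,B) = Σ_{(e,i) ∈ X : u(w,(e,i)) ∈ B} P(w,(e,i))`, where odd `i` is written as `2m+1`. -/
noncomputable def Qf (w : ℝ) (B : Set ℝ) : ℝ :=
  ∑' m : ℕ, ((if uF w 1 (2 * (m : ℤ) + 1) ∈ B then PF w 1 (2 * (m : ℤ) + 1) else 0)
           + (if uF w (-1) (2 * (m : ℤ) + 1) ∈ B then PF w (-1) (2 * (m : ℤ) + 1) else 0))

/-- The stationary probability measure `Q∞` on `W = [0,G]`. -/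
noncomputable def Qinf : Measure ℝ :=
  (volume.restrict (Set.Icc (0 : ℝ) G)).withDensity
    (fun w => ENNReal.ofReal ((3 * Real.log G)⁻¹ *
      (if w < gg ^ 2 then 1 / (1 + w) + 1 / (1 - w) else 1 / (1 + w))))

/-- The transition operator `U` of the Markov chain: `Uf(w) = Σ_{(e,i)} P(w,(e,i)) f(u(w,(e,i)))`. -/
noncomputable def U (f : ℝ → ℂ) : ℝ → ℂ := fun w =>
  ∑' m : ℕ, ((PF w 1 (2 * (m : ℤ) + 1) : ℂ) * f (uF w 1 (2 * (m : ℤ) + 1))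
           + (PF w (-1) (2 * (m : ℤ) + 1) : ℂ) * f (uF w (-1) (2 * (m : ℤ) + 1)))

/-- The `n`-step transition probability, as a measure-valued kernel: `Qiter 1 w = Q(w,·)` and
`Qiter (n+1) w B = ∫_W Qiter n w' B Q(w,dw')` (the transition measure `Q(w,·)` being purely
atomic with atom `u(w,(e,i))` of mass `P(w,(e,i))`). -/
noncomputable def Qiter : ℕ → ℝ → Measure ℝ
  | 0 => fun w => Measure.dirac w
  | n + 1 => fun w => Measure.sum (fun m : ℕ =>
      ENNReal.ofReal (PF w 1 (2 * (m : ℤ) + 1)) • Qiter n (uF w 1 (2 * (m : ℤ) + 1)) +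
      ENNReal.ofReal (PF w (-1) (2 * (m : ℤ) + 1)) • Qiter n (uF w (-1) (2 * (m : ℤ) + 1)))

end OCF

open OCF

namespace OCF

/-- The kernels `K_e(x,y)`, `e = ±1`. -/
noncomputable def K (e : ℤ) (x y : ℝ) : ℝ :=
  if e = 1 then
    (if y < gg ^ 2 then (1 - y ^ 2) * x / (2 * (1 + x * y)) else (1 + y) * x / (1 + x * y))
  else
    (if y < gg ^ 2 then (1 - y ^ 2) * x / (2 * (1 - x * y)) else 0)

end OCF


namespace OCF

lemma q_eq : (gg ^ 2) ^ 2 - 3 * gg ^ 2 + 1 = 0 := by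
  have h5 : Real.sqrt 5 ^ 2 = 5 := Real.sq_sqrt (by norm_num)
  unfold gg
  have : ∀ s : ℝ, s ^ 2 = 5 → (((s - 1) / 2) ^ 2) ^ 2 - 3 * ((s - 1) / 2) ^ 2 + 1 = 0 := by
    intro s hs
    have e : ((s - 1) / 2) ^ 2 = (3 - s) / 2 := by linear_combination hs / 4
    rw [e]; linear_combination hs / 4
  exact this _ h5

lemma G_eq : G = 2 - gg ^ 2 := by
  have h5 : Real.sqrt 5 ^ 2 = 5 := Real.sq_sqrt (by norm_num)
  unfold G gg
  linear_combination h5 / 4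

lemma q_bd : 0.3819 < gg ^ 2 ∧ gg ^ 2 < 0.382 := by
  have h5 : Real.sqrt 5 ^ 2 = 5 := Real.sq_sqrt (by norm_num)
  have h0 := Real.sqrt_nonneg 5
  have e : gg ^ 2 = (3 - Real.sqrt 5) / 2 := by unfold gg; linear_combination h5 / 4
  rw [e]
  constructor
  · have : Real.sqrt 5 < 2.2362 := by nlinarith
    linarith
  · have : 2.236 < Real.sqrt 5 := by nlinarith
    linarith

/-! explicit formulas -/

lemma u_p (w : ℝ) (k : ℕ) : uF w 1 (2 * (k : ℤ) + 1) = 1 / (2 * k + 1 + w) := by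
  simp [uF]

lemma u_m (w : ℝ) (hw : w < gg ^ 2) (k : ℕ) : uF w (-1) (2 * (k : ℤ) + 1) = 1 / (2 * k + 1 - w) := by
  simp [uF, hw]

lemma P_p0 (w : ℝ) (hw : w < gg ^ 2) (h0 : 0 ≤ w) :
    PF w 1 (2 * ((0 : ℕ) : ℤ) + 1) = (1 - w) / (2 * (2 + w)) := by
  have h1 : (1 + w) ≠ 0 := by positivity
  have h2 : (2 + w) ≠ 0 := by positivity
  simp only [PF, if_pos hw]
  norm_num
  field_simp
  ring

lemma P_m0 (w : ℝ) (hw : w < gg ^ 2) (h0 : 0 ≤ w) :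
    PF w (-1) (2 * ((0 : ℕ) : ℤ) + 1) = (1 + w) / (2 * (2 - w)) := by
  have := q_bd
  have h1 : (1 - w) ≠ 0 := by linarith
  have h2 : (2 - w) ≠ 0 := by linarith
  simp only [PF, if_pos hw]
  norm_num
  rw [show (1 : ℝ) + -w = 1 - w by ring, show (2 : ℝ) + -w = 2 - w by ring]
  field_simp
  ring

lemma P_ps (w : ℝ) (hw : w < gg ^ 2) (h0 : 0 ≤ w) (k : ℕ) :
    PF w 1 (2 * ((k + 1 : ℕ) : ℤ) + 1) = (1 - w ^ 2) / ((2 * k + 2 + w) * (2 * k + 4 + w)) := by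
  have hk : ¬ (2 * ((k + 1 : ℕ) : ℤ) + 1 = 1) := by omega
  have h1 : (2 * (k : ℝ) + 2 + w) ≠ 0 := by positivity
  have h2 : (2 * (k : ℝ) + 4 + w) ≠ 0 := by positivity
  simp only [PF, if_pos hw, if_neg hk]
  push_cast
  rw [show (2 * ((k : ℝ) + 1) + 1 - 1 + 0 + 1 * w) = 2 * k + 2 + w by ring,
    show (2 * ((k : ℝ) + 1) + 1 + 1 + 1 * w) = 2 * k + 4 + w by ring]
  field_simp
  ring

lemma P_ms (w : ℝ) (hw : w < gg ^ 2) (h0 : 0 ≤ w) (k : ℕ) :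
    PF w (-1) (2 * ((k + 1 : ℕ) : ℤ) + 1) = (1 - w ^ 2) / ((2 * k + 2 - w) * (2 * k + 4 - w)) := by
  have := q_bd
  have hk : ¬ (2 * ((k + 1 : ℕ) : ℤ) + 1 = 1) := by omega
  have hk0 : (0 : ℝ) ≤ k := by positivity
  have h1 : (2 * (k : ℝ) + 2 - w) ≠ 0 := by linarith
  have h2 : (2 * (k : ℝ) + 4 - w) ≠ 0 := by linarith
  simp only [PF, if_pos hw, if_neg hk]
  push_cast
  rw [show (2 * ((k : ℝ) + 1) + 1 - 1 + 0 + -1 * w) = 2 * k + 2 - w by ring,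
    show (2 * ((k : ℝ) + 1) + 1 + 1 + -1 * w) = 2 * k + 4 - w by ring]
  field_simp
  ring

lemma P2_m (w : ℝ) (hw : gg ^ 2 ≤ w) (i : ℤ) : PF w (-1) i = 0 := by
  simp [PF, not_lt.mpr hw]

lemma P2_0 (w : ℝ) (hw : gg ^ 2 ≤ w) :
    PF w 1 (2 * ((0 : ℕ) : ℤ) + 1) = 1 / (2 + w) := by
  have := q_bd
  have h1 : (1 + w) ≠ 0 := by linarith
  have h2 : (2 + w) ≠ 0 := by linarith
  simp only [PF, if_neg (not_lt.mpr hw)]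
  norm_num
  field_simp

lemma P2_s (w : ℝ) (hw : gg ^ 2 ≤ w) (k : ℕ) :
    PF w 1 (2 * ((k + 1 : ℕ) : ℤ) + 1) = 2 * (1 + w) / ((2 * k + 2 + w) * (2 * k + 4 + w)) := by
  have hk : ¬ (2 * ((k + 1 : ℕ) : ℤ) + 1 = 1) := by omega
  simp only [PF, if_neg (not_lt.mpr hw), if_neg hk]
  push_cast
  rw [show (2 * ((k : ℝ) + 1) + 1 - 1 + 0 + w) = 2 * k + 2 + w by ring,
    show (2 * ((k : ℝ) + 1) + 1 + 1 + w) = 2 * k + 4 + w by ring]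
  simp
  ring

lemma tel (a : ℕ → ℝ) (ha : Antitone a) (h0 : Tendsto a atTop (nhds 0)) :
    HasSum (fun k => a k - a (k + 1)) (a 0) := by
  rw [hasSum_iff_tendsto_nat_of_nonneg (fun k => sub_nonneg.mpr (ha (Nat.le_succ k)))]
  simp_rw [Finset.sum_range_sub']
  simpa using (tendsto_const_nhds (x := a 0)).sub h0

lemma tel_lin (b : ℝ) (hb : 0 < b) :
    HasSum (fun k : ℕ => 2 / ((2 * k + b) * (2 * k + b + 2))) (1 / b) := by
  have h := tel (fun k : ℕ => 1 / (2 * (k : ℝ) + b)) ?_ ?_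
  · convert h using 1
    · ext k
      push_cast
      have : (0 : ℝ) ≤ k := by positivity
      field_simp
      ring
    · simp
  · intro m n hmn
    have : (m : ℝ) ≤ n := by exact_mod_cast hmn
    have : (0 : ℝ) ≤ m := by positivity
    apply one_div_le_one_div_of_le <;> linarith
  · simp_rw [one_div]
    apply Filter.Tendsto.inv_tendsto_atTop
    apply tendsto_atTop_add_const_right
    exact tendsto_natCast_atTop_atTop.const_mul_atTop (by norm_num)

lemma tel_cub : HasSum (fun k : ℕ => 1 / (((k : ℝ) + 1) * (k + 2) * (k + 3))) (1 / 4) := by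
  have h := tel (fun k : ℕ => 1 / (2 * ((k : ℝ) + 1) * (k + 2))) ?_ ?_
  · convert h using 1
    · ext k
      push_cast
      have : (0 : ℝ) ≤ k := by positivity
      field_simp
      ring
    · norm_num
  · intro m n hmn
    have : (m : ℝ) ≤ n := by exact_mod_cast hmn
    have : (0 : ℝ) ≤ m := by positivity
    show 1 / (2 * ((n : ℝ) + 1) * (n + 2)) ≤ 1 / (2 * ((m : ℝ) + 1) * (m + 2))
    gcongr
  · simp_rw [one_div]
    apply Filter.Tendsto.inv_tendsto_atTop
    apply Filter.Tendsto.atTop_mul_atTop₀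
    · exact (tendsto_atTop_add_const_right _ _ tendsto_natCast_atTop_atTop).const_mul_atTop (by norm_num)
    · exact (tendsto_atTop_add_const_right _ _ tendsto_natCast_atTop_atTop)

/-- total mass of the `m`-th pair -/
lemma P_nonneg (w : ℝ) (h0 : 0 ≤ w) (hG : w ≤ G) (m : ℕ) :
    0 ≤ PF w 1 (2 * (m : ℤ) + 1) ∧ 0 ≤ PF w (-1) (2 * (m : ℤ) + 1) := by
  have hq := q_bd
  rcases lt_or_ge w (gg ^ 2) with hw | hw
  · rcases m with _ | k
    · rw [P_p0 w hw h0, P_m0 w hw h0]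
      constructor <;> apply div_nonneg <;> linarith
    · rw [P_ps w hw h0, P_ms w hw h0]
      have hk0 : (0 : ℝ) ≤ k := by positivity
      constructor <;> apply div_nonneg <;> nlinarith
  · rw [P2_m w hw]
    refine ⟨?_, le_rfl⟩
    rcases m with _ | k
    · rw [P2_0 w hw]; positivity
    · rw [P2_s w hw]; positivity

lemma P_sum (w : ℝ) (h0 : 0 ≤ w) (hG : w ≤ G) :
    HasSum (fun m : ℕ => PF w 1 (2 * (m : ℤ) + 1) + PF w (-1) (2 * (m : ℤ) + 1)) 1 := by
  have hq := q_bd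
  rw [← hasSum_nat_add_iff' 1]
  simp only [Finset.range_one, Finset.sum_singleton]
  rcases lt_or_ge w (gg ^ 2) with hw | hw
  · rw [P_p0 w hw h0, P_m0 w hw h0]
    simp_rw [P_ps w hw h0, P_ms w hw h0]
    have a := ((tel_lin (2 + w) (by linarith)).mul_left ((1 - w ^ 2) / 2)).add
      ((tel_lin (2 - w) (by linarith)).mul_left ((1 - w ^ 2) / 2))
    convert a using 1
    · rfl
    · ext k
      have hk0 : (0 : ℝ) ≤ k := by positivity
      have : 2 * (k : ℝ) + 2 - w ≠ 0 := by linarith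
      have : 2 * (k : ℝ) + 4 - w ≠ 0 := by linarith
      rw [show 2 * (k : ℝ) + (2 + w) = 2 * k + 2 + w by ring,
        show 2 * (k : ℝ) + (2 - w) = 2 * k + 2 - w by ring,
        show 2 * (k : ℝ) + 2 + w + 2 = 2 * k + 4 + w by ring,
        show 2 * (k : ℝ) + 2 - w + 2 = 2 * k + 4 - w by ring]
      field_simp
    · have : 2 - w ≠ 0 := by linarith
      field_simp
      ring
  · rw [P2_m w hw, P2_0 w hw]
    simp_rw [P2_m w hw, P2_s w hw]
    have a := ((tel_lin (2 + w) (by linarith)).mul_left (1 + w))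
    convert a using 1
    · rfl
    · ext k
      rw [show 2 * (k : ℝ) + (2 + w) = 2 * k + 2 + w by ring,
        show 2 * (k : ℝ) + 2 + w + 2 = 2 * k + 4 + w by ring]
      ring
    · have : 2 + w ≠ 0 := by linarith
      field_simp
      ring

lemma u_mem (w : ℝ) (h0 : 0 ≤ w) (hG : w ≤ G) (m : ℕ) :
    uF w 1 (2 * (m : ℤ) + 1) ∈ Icc 0 G ∧ uF w (-1) (2 * (m : ℤ) + 1) ∈ Icc 0 G := by
  have hq := q_bd
  have hqe := q_eq
  have hGe := G_eq
  have hm : (0 : ℝ) ≤ m := by positivity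
  have key : ∀ t : ℝ, 1 - gg ^ 2 ≤ t → 1 / t ∈ Icc 0 G := by
    intro t ht
    refine ⟨by apply div_nonneg <;> linarith, ?_⟩
    rw [div_le_iff₀ (by linarith), hGe]
    nlinarith
  constructor
  · rw [u_p]; apply key; linarith
  · simp only [uF]
    norm_num
    split_ifs with h
    · rw [← one_div]; apply key; linarith
    · rw [← one_div]; apply key; linarith

end OCF

namespace OCF

lemma pr2 {a b a' b' : ℝ} (ha : 0 ≤ a) (hb : 0 ≤ b) (h1 : a ≤ a') (h2 : b ≤ b') : a * b ≤ a' * b' :=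
  mul_le_mul h1 h2 hb (ha.trans h1)

lemma ratB1 (k : ℝ) (hk : 0 ≤ k) :
    8 * (k + 1) ^ 2 / (((2 * k + 2.38) * (2 * k + 4.38)) * ((2 * k + 2.38) * (2 * k + 4.38)) * (2 * k + 3.38))
      + 2 * 2.62 / ((2 * k + 4.62) * ((2 * k + 2.38) * (2 * k + 4.38)) * (2 * k + 3.38))
      ≤ 0.35 / ((k + 1) * (k + 2) * (k + 3)) := by
  rw [div_add_div _ _ (by positivity) (by positivity), div_le_div_iff₀ (by positivity) (by positivity),
    ← sub_nonneg]
  ring_nf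
  positivity

lemma ratB2 (k : ℝ) (hk : 0 ≤ k) :
    8 * (k + 1) ^ 2 / (((2 * k + 2.38) * (2 * k + 4.38)) * ((2 * k + 2) * (2 * k + 4)) * (2 * k + 3.38))
      + 2 / ((2 * k + 3) * ((2 * k + 2) * (2 * k + 4)) * (2 * k + 3.38))
      ≤ 0.35 / ((k + 1) * (k + 2) * (k + 3)) := by
  rw [div_add_div _ _ (by positivity) (by positivity), div_le_div_iff₀ (by positivity) (by positivity),
    ← sub_nonneg]
  ring_nf
  positivity

lemma ratAp (k : ℝ) (hk : 0 ≤ k) :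
    (0.764 * (2 * k + 3) + 2.292) / (((2 * k + 2) * (2 * k + 4)) * ((2 * k + 2) * (2 * k + 4)))
      + 1 / (((2 * k + 2) * (2 * k + 4)) * (2 * k + 3) * (2 * k + 3))
      ≤ 0.52 / ((k + 1) * (k + 2) * (k + 3)) := by
  rw [div_add_div _ _ (by positivity) (by positivity), div_le_div_iff₀ (by positivity) (by positivity),
    ← sub_nonneg]
  ring_nf
  positivity

lemma ratAm (k : ℝ) (hk : 0 ≤ k) :
    (2 * k + 3) * (1.528 * k + 2) / (((2 * k + 1.618) * (2 * k + 3.618)) * ((2 * k + 1.618) * (2 * k + 3.618)) * (2 * k + 2.618))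
      + 1 / (((2 * k + 1.618) * (2 * k + 3.618)) * (2 * k + 2.618) * (2 * k + 2.618))
      ≤ 0.56 / ((k + 1) * (k + 2) * (k + 3)) := by
  rw [div_add_div _ _ (by positivity) (by positivity), div_le_div_iff₀ (by positivity) (by positivity),
    ← sub_nonneg]
  ring_nf
  positivity

lemma tailB (k : ℝ) (hk : 0 ≤ k) (w w' : ℝ) (hw : 0.381 ≤ w) (hw1 : w ≤ 1.62)
    (hw' : w' = 0 ∨ (0.381 ≤ w' ∧ w' ≤ 1.62)) :
    |2 * (1 + w) / ((2 * k + 2 + w) * (2 * k + 4 + w)) - 2 * (1 + w') / ((2 * k + 2 + w') * (2 * k + 4 + w'))|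
        * (1 / (2 * k + 3 + w))
      + 2 * (1 + w') / ((2 * k + 2 + w') * (2 * k + 4 + w')) * |1 / (2 * k + 3 + w) - 1 / (2 * k + 3 + w')|
      ≤ 0.35 / ((k + 1) * (k + 2) * (k + 3)) * |w - w'| := by
  have h0 : 0 ≤ w := by linarith
  have h0' : 0 ≤ w' := by rcases hw' with h | h <;> linarith
  have h1' : w' ≤ 1.62 := by rcases hw' with h | h <;> linarith
  have e1 : 2 * (1 + w) / ((2 * k + 2 + w) * (2 * k + 4 + w)) - 2 * (1 + w') / ((2 * k + 2 + w') * (2 * k + 4 + w'))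
      = 2 * (4 * (k + 1) ^ 2 - 1 - (1 + w) * (1 + w')) / (((2 * k + 2 + w) * (2 * k + 4 + w)) * ((2 * k + 2 + w') * (2 * k + 4 + w'))) * (w - w') := by
    field_simp
    ring
  have e2 : 1 / (2 * k + 3 + w) - 1 / (2 * k + 3 + w') = -(1 / ((2 * k + 3 + w) * (2 * k + 3 + w'))) * (w - w') := by
    field_simp
    ring
  rw [e1, e2, abs_mul, abs_mul, abs_div, abs_neg, abs_of_pos (show 0 < ((2 * k + 2 + w) * (2 * k + 4 + w)) * ((2 * k + 2 + w') * (2 * k + 4 + w')) by positivity),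
    abs_of_pos (show 0 < 1 / ((2 * k + 3 + w) * (2 * k + 3 + w')) by positivity)]
  have hN : |2 * (4 * (k + 1) ^ 2 - 1 - (1 + w) * (1 + w'))| ≤ 8 * (k + 1) ^ 2 := by
    rw [abs_le]
    constructor <;> nlinarith [mul_nonneg h0 h0', mul_le_mul hw1 h1' h0' (by norm_num)]
  have hs := abs_nonneg (w - w')
  have main : |2 * (4 * (k + 1) ^ 2 - 1 - (1 + w) * (1 + w'))| / (((2 * k + 2 + w) * (2 * k + 4 + w)) * ((2 * k + 2 + w') * (2 * k + 4 + w')) * (2 * k + 3 + w))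
      + 2 * (1 + w') / ((2 * k + 3 + w') * ((2 * k + 2 + w') * (2 * k + 4 + w')) * (2 * k + 3 + w))
      ≤ 0.35 / ((k + 1) * (k + 2) * (k + 3)) := by
    rcases hw' with rfl | ⟨ha, hb⟩
    · refine le_trans (add_le_add ?_ ?_) (ratB2 k hk)
      · apply div_le_div₀ (by positivity) hN (by positivity)
        repeat (first | linarith | (refine pr2 (by positivity) (by positivity) ?_ ?_))
      · apply div_le_div₀ (by positivity) (by norm_num) (by positivity)
        repeat (first | linarith | (refine pr2 (by positivity) (by positivity) ?_ ?_))
    · refine le_trans (add_le_add ?_ ?_) (ratB1 k hk)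
      · apply div_le_div₀ (by positivity) hN (by positivity)
        repeat (first | linarith | (refine pr2 (by positivity) (by positivity) ?_ ?_))
      · rw [mul_assoc (2 * k + 3 + w'), mul_assoc (2 * k + 4.62), ← div_div (2 * (1 + w')), ← div_div (2 * 2.62)]
        apply div_le_div₀ (by positivity) _ (by positivity)
        · repeat (first | linarith | (refine pr2 (by positivity) (by positivity) ?_ ?_))
        · rw [div_le_div_iff₀ (by positivity) (by positivity)]
          nlinarith
  calc _ = (|2 * (4 * (k + 1) ^ 2 - 1 - (1 + w) * (1 + w'))| / (((2 * k + 2 + w) * (2 * k + 4 + w)) * ((2 * k + 2 + w') * (2 * k + 4 + w')) * (2 * k + 3 + w))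
      + 2 * (1 + w') / ((2 * k + 3 + w') * ((2 * k + 2 + w') * (2 * k + 4 + w')) * (2 * k + 3 + w))) * |w - w'| := by
        field_simp
    _ ≤ _ := mul_le_mul_of_nonneg_right main hs

lemma tailAp (k : ℝ) (hk : 0 ≤ k) (w w' : ℝ) (hw : 0 ≤ w) (hw1 : w ≤ 0.382)
    (hw' : 0 ≤ w') (hw1' : w' ≤ 0.382) :
    |(1 - w ^ 2) / ((2 * k + 2 + w) * (2 * k + 4 + w)) - (1 - w' ^ 2) / ((2 * k + 2 + w') * (2 * k + 4 + w'))|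
        * (1 / (2 * k + 3 + w))
      + (1 - w' ^ 2) / ((2 * k + 2 + w') * (2 * k + 4 + w')) * |1 / (2 * k + 3 + w) - 1 / (2 * k + 3 + w')|
      ≤ 0.52 / ((k + 1) * (k + 2) * (k + 3)) * |w - w'| := by
  have e1 : (1 - w ^ 2) / ((2 * k + 2 + w) * (2 * k + 4 + w)) - (1 - w' ^ 2) / ((2 * k + 2 + w') * (2 * k + 4 + w'))
      = -((2 * k + 3) * ((2 * k + 3) * (w + w') + 2 * (1 + w * w')) / (((2 * k + 2 + w) * (2 * k + 4 + w)) * ((2 * k + 2 + w') * (2 * k + 4 + w')))) * (w - w') := by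
    field_simp
    ring
  have e2 : 1 / (2 * k + 3 + w) - 1 / (2 * k + 3 + w') = -(1 / ((2 * k + 3 + w) * (2 * k + 3 + w'))) * (w - w') := by
    field_simp
    ring
  rw [e1, e2, abs_mul, abs_mul, abs_neg, abs_neg, abs_of_nonneg (show 0 ≤ (2 * k + 3) * ((2 * k + 3) * (w + w') + 2 * (1 + w * w')) / (((2 * k + 2 + w) * (2 * k + 4 + w)) * ((2 * k + 2 + w') * (2 * k + 4 + w'))) by positivity),
    abs_of_pos (show 0 < 1 / ((2 * k + 3 + w) * (2 * k + 3 + w')) by positivity)]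
  have hs := abs_nonneg (w - w')
  have main : (2 * k + 3) * ((2 * k + 3) * (w + w') + 2 * (1 + w * w')) / (((2 * k + 2 + w) * (2 * k + 4 + w)) * ((2 * k + 2 + w') * (2 * k + 4 + w')) * (2 * k + 3 + w))
      + (1 - w' ^ 2) / (((2 * k + 2 + w') * (2 * k + 4 + w')) * (2 * k + 3 + w') * (2 * k + 3 + w))
      ≤ 0.52 / ((k + 1) * (k + 2) * (k + 3)) := by
    refine le_trans (add_le_add ?_ ?_) (ratAp k hk)
    · rw [mul_comm (2 * k + 3), mul_div_mul_comm]
      rw [← mul_one ((0.764 * (2 * k + 3) + 2.292) / _)]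
      apply mul_le_mul
      · apply div_le_div₀ (by positivity) _ (by positivity)
        · repeat (first | linarith | (refine pr2 (by positivity) (by positivity) ?_ ?_))
        · nlinarith [mul_le_mul hw1 hw1' hw' (by norm_num)]
      · rw [div_le_one (by positivity)]; linarith
      · positivity
      · positivity
    · apply div_le_div₀ (by positivity) (by nlinarith) (by positivity)
      repeat (first | linarith | (refine pr2 (by positivity) (by positivity) ?_ ?_))
  calc _ = ((2 * k + 3) * ((2 * k + 3) * (w + w') + 2 * (1 + w * w')) / (((2 * k + 2 + w) * (2 * k + 4 + w)) * ((2 * k + 2 + w') * (2 * k + 4 + w')) * (2 * k + 3 + w))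
      + (1 - w' ^ 2) / (((2 * k + 2 + w') * (2 * k + 4 + w')) * (2 * k + 3 + w') * (2 * k + 3 + w))) * |w - w'| := by
        field_simp
    _ ≤ _ := mul_le_mul_of_nonneg_right main hs

lemma tailAm (k : ℝ) (hk : 0 ≤ k) (w w' : ℝ) (hw : 0 ≤ w) (hw1 : w ≤ 0.382)
    (hw' : 0 ≤ w') (hw1' : w' ≤ 0.382) :
    |(1 - w ^ 2) / ((2 * k + 2 - w) * (2 * k + 4 - w)) - (1 - w' ^ 2) / ((2 * k + 2 - w') * (2 * k + 4 - w'))|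
        * (1 / (2 * k + 3 - w))
      + (1 - w' ^ 2) / ((2 * k + 2 - w') * (2 * k + 4 - w')) * |1 / (2 * k + 3 - w) - 1 / (2 * k + 3 - w')|
      ≤ 0.56 / ((k + 1) * (k + 2) * (k + 3)) * |w - w'| := by
  have p2 : 0 < 2 * k + 2 - w := by linarith
  have p3 : 0 < 2 * k + 3 - w := by linarith
  have p4 : 0 < 2 * k + 4 - w := by linarith
  have p2' : 0 < 2 * k + 2 - w' := by linarith
  have p3' : 0 < 2 * k + 3 - w' := by linarith
  have p4' : 0 < 2 * k + 4 - w' := by linarith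
  have na := p2.ne'
  have nb := p3.ne'
  have nc := p4.ne'
  have nd := p2'.ne'
  have ne := p3'.ne'
  have nf := p4'.ne'
  have e1 : (1 - w ^ 2) / ((2 * k + 2 - w) * (2 * k + 4 - w)) - (1 - w' ^ 2) / ((2 * k + 2 - w') * (2 * k + 4 - w'))
      = ((2 * k + 3) * (2 * (1 + w * w') - (2 * k + 3) * (w + w')) / (((2 * k + 2 - w) * (2 * k + 4 - w)) * ((2 * k + 2 - w') * (2 * k + 4 - w')))) * (w - w') := by
    rw [div_sub_div _ _ (by positivity) (by positivity), div_mul_eq_mul_div]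
    congr 1
    ring
  have e2 : 1 / (2 * k + 3 - w) - 1 / (2 * k + 3 - w') = (1 / ((2 * k + 3 - w) * (2 * k + 3 - w'))) * (w - w') := by
    field_simp
    ring
  rw [e1, e2, abs_mul, abs_mul, abs_div, abs_of_pos (show 0 < ((2 * k + 2 - w) * (2 * k + 4 - w)) * ((2 * k + 2 - w') * (2 * k + 4 - w')) by positivity),
    abs_of_pos (show 0 < 1 / ((2 * k + 3 - w) * (2 * k + 3 - w')) by positivity)]
  have hs := abs_nonneg (w - w')
  have hN : |(2 * k + 3) * (2 * (1 + w * w') - (2 * k + 3) * (w + w'))| ≤ (2 * k + 3) * (1.528 * k + 2) := by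
    rw [abs_mul, abs_of_pos (show 0 < 2 * k + 3 by positivity)]
    apply mul_le_mul_of_nonneg_left _ (by positivity)
    rw [abs_le]
    constructor <;> nlinarith [mul_nonneg hw hw', mul_le_mul hw1 hw1' hw' (by norm_num)]
  have main : |(2 * k + 3) * (2 * (1 + w * w') - (2 * k + 3) * (w + w'))| / (((2 * k + 2 - w) * (2 * k + 4 - w)) * ((2 * k + 2 - w') * (2 * k + 4 - w')) * (2 * k + 3 - w))
      + (1 - w' ^ 2) / (((2 * k + 2 - w') * (2 * k + 4 - w')) * (2 * k + 3 - w') * (2 * k + 3 - w))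
      ≤ 0.56 / ((k + 1) * (k + 2) * (k + 3)) := by
    refine le_trans (add_le_add ?_ ?_) (ratAm k hk)
    · apply div_le_div₀ (by positivity) hN (by positivity)
      repeat (first | linarith | (refine pr2 (by positivity) (by positivity) ?_ ?_))
    · apply div_le_div₀ (by positivity) (by nlinarith) (by positivity)
      repeat (first | linarith | (refine pr2 (by positivity) (by positivity) ?_ ?_))
  calc _ = (|(2 * k + 3) * (2 * (1 + w * w') - (2 * k + 3) * (w + w'))| / (((2 * k + 2 - w) * (2 * k + 4 - w)) * ((2 * k + 2 - w') * (2 * k + 4 - w')) * (2 * k + 3 - w))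
      + (1 - w' ^ 2) / (((2 * k + 2 - w') * (2 * k + 4 - w')) * (2 * k + 3 - w') * (2 * k + 3 - w))) * |w - w'| := by
        field_simp
    _ ≤ _ := mul_le_mul_of_nonneg_right main hs

end OCF

namespace OCF

/-- real transition operator -/
noncomputable def V (f : ℝ → ℝ) (w : ℝ) : ℝ :=
  ∑' m : ℕ, (PF w 1 (2 * (m : ℤ) + 1) * f (uF w 1 (2 * (m : ℤ) + 1))
           + PF w (-1) (2 * (m : ℤ) + 1) * f (uF w (-1) (2 * (m : ℤ) + 1)))

structure Bd (f : ℝ → ℝ) (A B J : ℝ) : Prop where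
  l1 : ∀ y y', 0 ≤ y → y < gg ^ 2 → 0 ≤ y' → y' < gg ^ 2 → |f y - f y'| ≤ A * |y - y'|
  l2 : ∀ y y', gg ^ 2 ≤ y → y ≤ G → gg ^ 2 ≤ y' → y' ≤ G → |f y - f y'| ≤ B * |y - y'|
  l3 : ∀ y, gg ^ 2 ≤ y → y ≤ G → |f y - f 0| ≤ J

lemma V_summable (f : ℝ → ℝ) (M : ℝ) (hf : ∀ y, 0 ≤ y → y ≤ G → |f y| ≤ M) (w : ℝ) (h0 : 0 ≤ w) (hG : w ≤ G) :
    Summable (fun m : ℕ => PF w 1 (2 * (m : ℤ) + 1) * f (uF w 1 (2 * (m : ℤ) + 1))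
           + PF w (-1) (2 * (m : ℤ) + 1) * f (uF w (-1) (2 * (m : ℤ) + 1))) := by
  refine Summable.of_norm_bounded ((P_sum w h0 hG).summable.mul_right M) ?_
  intro m
  obtain ⟨p1, p2⟩ := P_nonneg w h0 hG m
  obtain ⟨u1, u2⟩ := u_mem w h0 hG m
  rw [Real.norm_eq_abs, add_mul]
  refine (abs_add_le _ _).trans (add_le_add ?_ ?_)
  · rw [abs_mul, abs_of_nonneg p1]
    exact mul_le_mul_of_nonneg_left (hf _ u1.1 u1.2) p1
  · rw [abs_mul, abs_of_nonneg p2]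
    exact mul_le_mul_of_nonneg_left (hf _ u2.1 u2.2) p2

lemma V_shift (f : ℝ → ℝ) (M : ℝ) (hf : ∀ y, 0 ≤ y → y ≤ G → |f y| ≤ M) (w : ℝ) (h0 : 0 ≤ w) (hG : w ≤ G) (c : ℝ) :
    V (fun y => f y - c) w = V f w - c := by
  have hP := P_sum w h0 hG
  have h1 := (V_summable f M hf w h0 hG).hasSum.sub (hP.mul_right c)
  rw [one_mul] at h1
  rw [V, V, ← h1.tsum_eq]
  congr 1
  ext m
  ring

noncomputable def T1 (h : ℝ → ℝ) (w : ℝ) (k : ℕ) : ℝ :=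
  (1 - w ^ 2) / ((2 * k + 2 + w) * (2 * k + 4 + w)) * h (1 / (2 * k + 3 + w))
  + (1 - w ^ 2) / ((2 * k + 2 - w) * (2 * k + 4 - w)) * h (1 / (2 * k + 3 - w))

noncomputable def T2 (h : ℝ → ℝ) (w : ℝ) (k : ℕ) : ℝ :=
  2 * (1 + w) / ((2 * k + 2 + w) * (2 * k + 4 + w)) * h (1 / (2 * k + 3 + w))

lemma V1 (f : ℝ → ℝ) (M : ℝ) (hf : ∀ y, 0 ≤ y → y ≤ G → |f y| ≤ M) (w : ℝ) (h0 : 0 ≤ w) (hq : w < gg ^ 2) :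
    Summable (T1 f w) ∧ V f w = (1 - w) / (2 * (2 + w)) * f (1 / (1 + w)) + (1 + w) / (2 * (2 - w)) * f (1 / (1 - w))
      + ∑' k, T1 f w k := by
  have hb := q_bd
  have hGe := G_eq
  have hs := V_summable f M hf w h0 (by linarith)
  have e : (fun m : ℕ => PF w 1 (2 * ((m + 1 : ℕ) : ℤ) + 1) * f (uF w 1 (2 * ((m + 1 : ℕ) : ℤ) + 1))
           + PF w (-1) (2 * ((m + 1 : ℕ) : ℤ) + 1) * f (uF w (-1) (2 * ((m + 1 : ℕ) : ℤ) + 1))) = T1 f w := by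
    ext k
    rw [P_ps w hq h0, P_ms w hq h0, u_p, u_m w hq, T1]
    push_cast
    rw [show 2 * ((k : ℝ) + 1) + 1 = 2 * k + 3 by ring]
  constructor
  · rw [← e]
    exact (summable_nat_add_iff 1).mpr hs
  · rw [V, hs.tsum_eq_zero_add, e, P_p0 w hq h0, P_m0 w hq h0, u_p, u_m w hq]
    norm_num

lemma V2 (f : ℝ → ℝ) (M : ℝ) (hf : ∀ y, 0 ≤ y → y ≤ G → |f y| ≤ M) (w : ℝ) (hq : gg ^ 2 ≤ w) (hG : w ≤ G) :
    Summable (T2 f w) ∧ V f w = 1 / (2 + w) * f (1 / (1 + w)) + ∑' k, T2 f w k := by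
  have hb := q_bd
  have h0 : 0 ≤ w := by linarith
  have hs := V_summable f M hf w h0 hG
  have e : (fun m : ℕ => PF w 1 (2 * ((m + 1 : ℕ) : ℤ) + 1) * f (uF w 1 (2 * ((m + 1 : ℕ) : ℤ) + 1))
           + PF w (-1) (2 * ((m + 1 : ℕ) : ℤ) + 1) * f (uF w (-1) (2 * ((m + 1 : ℕ) : ℤ) + 1))) = T2 f w := by
    ext k
    rw [P2_s w hq, P2_m w hq, u_p, T2]
    push_cast
    rw [show 2 * ((k : ℝ) + 1) + 1 = 2 * k + 3 by ring]
    ring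
  constructor
  · rw [← e]
    exact (summable_nat_add_iff 1).mpr hs
  · rw [V, hs.tsum_eq_zero_add, e, P2_0 w hq, P2_m w hq, u_p]
    norm_num

lemma sumdiff (a b : ℕ → ℝ) (ha : Summable a) (hb : Summable b) (C : ℝ)
    (h : ∀ k : ℕ, |a k - b k| ≤ C * (1 / (((k : ℝ) + 1) * (k + 2) * (k + 3)))) :
    |∑' k, a k - ∑' k, b k| ≤ C / 4 := by
  rw [← ha.tsum_sub hb]
  have := tsum_of_norm_bounded (f := fun k => a k - b k) (tel_cub.mul_left C)
    (fun k => by rw [Real.norm_eq_abs]; exact h k)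
  rw [Real.norm_eq_abs] at this
  linarith

lemma proddiff (A p p' x x' a a' : ℝ) (hp : 0 ≤ p') (ha : |a| ≤ A * x) (hd : |a - a'| ≤ A * |x - x'|) :
    |p * a - p' * a'| ≤ A * (|p - p'| * x + p' * |x - x'|) := by
  have : p * a - p' * a' = (p - p') * a + p' * (a - a') := by ring
  rw [this]
  refine (abs_add_le _ _).trans ?_
  rw [abs_mul, abs_mul, abs_of_nonneg hp]
  nlinarith [mul_le_mul_of_nonneg_left ha (abs_nonneg (p - p')), mul_le_mul_of_nonneg_left hd hp]

lemma inW1 (t : ℝ) (ht : 3 - gg ^ 2 < t) : 0 ≤ 1 / t ∧ 1 / t < gg ^ 2 := by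
  have hb := q_bd
  have he := q_eq
  refine ⟨by apply div_nonneg <;> linarith, ?_⟩
  rw [div_lt_iff₀ (by linarith)]
  nlinarith

lemma inW2 (t : ℝ) (ht : 1 - gg ^ 2 ≤ t) (ht' : t ≤ 3 - gg ^ 2) : gg ^ 2 ≤ 1 / t ∧ 1 / t ≤ G := by
  have hb := q_bd
  have he := q_eq
  rw [G_eq, div_le_iff₀ (by linarith), le_div_iff₀ (by linarith)]
  constructor <;> nlinarith

/-- hypotheses on the centred function -/
structure Hd (h : ℝ → ℝ) (A B J : ℝ) : Prop where
  m : ∀ y, 0 ≤ y → y ≤ G → |h y| ≤ 2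
  l0 : ∀ y, 0 ≤ y → y < gg ^ 2 → |h y| ≤ A * y
  l1 : ∀ y y', 0 ≤ y → y < gg ^ 2 → 0 ≤ y' → y' < gg ^ 2 → |h y - h y'| ≤ A * |y - y'|
  l2 : ∀ y y', gg ^ 2 ≤ y → y ≤ G → gg ^ 2 ≤ y' → y' ≤ G → |h y - h y'| ≤ B * |y - y'|
  l3 : ∀ y, gg ^ 2 ≤ y → y ≤ G → |h y| ≤ J

lemma T2diff (h : ℝ → ℝ) (A B J : ℝ) (hh : Hd h A B J) (hA : 0 ≤ A) (w w' : ℝ) (hw : gg ^ 2 ≤ w) (hw1 : w ≤ G)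
    (hw' : w' = 0 ∨ (gg ^ 2 ≤ w' ∧ w' ≤ G)) (k : ℕ) :
    |T2 h w k - T2 h w' k| ≤ A * 0.35 * |w - w'| * (1 / (((k : ℝ) + 1) * (k + 2) * (k + 3))) := by
  have hb := q_bd
  have hGe := G_eq
  have hk : (0 : ℝ) ≤ k := by positivity
  have h0' : 0 ≤ w' := by rcases hw' with h | h <;> linarith
  obtain ⟨x0, x1⟩ := inW1 (2 * k + 3 + w) (by linarith)
  have x' : 0 ≤ 1 / (2 * (k : ℝ) + 3 + w') ∧ 1 / (2 * (k : ℝ) + 3 + w') < gg ^ 2 := by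
    refine inW1 _ (by linarith)
  have t := tailB k hk w w' (by linarith) (by linarith)
    (hw'.imp id (fun h => ⟨by linarith, by linarith⟩))
  have p := proddiff A (2 * (1 + w) / ((2 * k + 2 + w) * (2 * k + 4 + w)))
    (2 * (1 + w') / ((2 * k + 2 + w') * (2 * k + 4 + w'))) (1 / (2 * k + 3 + w)) (1 / (2 * k + 3 + w')) _ _
    (by positivity) (hh.l0 _ x0 x1) (hh.l1 _ _ x0 x1 x'.1 x'.2)
  rw [T2, T2]
  refine p.trans ((mul_le_mul_of_nonneg_left t hA).trans (le_of_eq ?_))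
  ring

lemma T1diff (h : ℝ → ℝ) (A B J : ℝ) (hh : Hd h A B J) (hA : 0 ≤ A) (w w' : ℝ) (hw : 0 ≤ w) (hw1 : w < gg ^ 2)
    (hw' : 0 ≤ w') (hw1' : w' < gg ^ 2) (k : ℕ) :
    |T1 h w k - T1 h w' k| ≤ A * 1.08 * |w - w'| * (1 / (((k : ℝ) + 1) * (k + 2) * (k + 3))) := by
  have hb := q_bd
  have hk : (0 : ℝ) ≤ k := by positivity
  have x := inW1 (2 * k + 3 + w) (by linarith)
  have x' := inW1 (2 * k + 3 + w') (by linarith)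
  have y := inW1 (2 * k + 3 - w) (by linarith)
  have y' := inW1 (2 * k + 3 - w') (by linarith)
  have hsq : 0 ≤ 1 - w' ^ 2 := by nlinarith
  have t := tailAp k hk w w' hw (by linarith) hw' (by linarith)
  have s := tailAm k hk w w' hw (by linarith) hw' (by linarith)
  have p := proddiff A ((1 - w ^ 2) / ((2 * k + 2 + w) * (2 * k + 4 + w)))
    ((1 - w' ^ 2) / ((2 * k + 2 + w') * (2 * k + 4 + w'))) (1 / (2 * k + 3 + w)) (1 / (2 * k + 3 + w')) _ _
    (by positivity) (hh.l0 _ x.1 x.2) (hh.l1 _ _ x.1 x.2 x'.1 x'.2)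
  have r := proddiff A ((1 - w ^ 2) / ((2 * k + 2 - w) * (2 * k + 4 - w)))
    ((1 - w' ^ 2) / ((2 * k + 2 - w') * (2 * k + 4 - w'))) (1 / (2 * k + 3 - w)) (1 / (2 * k + 3 - w')) _ _
    (div_nonneg hsq (mul_nonneg (by linarith) (by linarith))) (hh.l0 _ y.1 y.2) (hh.l1 _ _ y.1 y.2 y'.1 y'.2)
  rw [T1, T1, add_sub_add_comm]
  refine (abs_add_le _ _).trans ((add_le_add (p.trans (mul_le_mul_of_nonneg_left t hA))
    (r.trans (mul_le_mul_of_nonneg_left s hA))).trans (le_of_eq ?_))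
  ring

lemma rowB (h : ℝ → ℝ) (c : ℝ) (hc : 0 ≤ c) (hh : Hd h (1.25 * c) (0.35 * c) (0.52 * c))
    (w w' : ℝ) (hw : gg ^ 2 ≤ w) (hw1 : w ≤ G) (hw' : gg ^ 2 ≤ w') (hw1' : w' ≤ G) :
    |V h w - V h w'| ≤ 0.35 * (c * 0.8234) * |w - w'| := by
  have hb := q_bd
  have hGe := G_eq
  obtain ⟨s1, e1⟩ := V2 h 2 hh.m w hw hw1
  obtain ⟨s2, e2⟩ := V2 h 2 hh.m w' hw' hw1'
  have hT := sumdiff _ _ s1 s2 _ (T2diff h _ _ _ hh (by positivity) w w' hw hw1 (Or.inr ⟨hw', hw1'⟩))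
  have a := inW2 (1 + w) (by linarith) (by linarith)
  have a' := inW2 (1 + w') (by linarith) (by linarith)
  have h1 := hh.l3 _ a.1 a.2
  have h2 := hh.l2 _ _ a.1 a.2 a'.1 a'.2
  have hs := abs_nonneg (w - w')
  have d1 : |1 / (2 + w) - 1 / (2 + w')| ≤ 0.1764 * |w - w'| := by
    have : 1 / (2 + w) - 1 / (2 + w') = -(1 / ((2 + w) * (2 + w'))) * (w - w') := by
      have : 2 + w ≠ 0 := by linarith
      have : 2 + w' ≠ 0 := by linarith
      field_simp
      ring
    rw [this, abs_mul, abs_neg]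
    apply mul_le_mul_of_nonneg_right _ hs
    rw [abs_of_nonneg (by apply div_nonneg <;> nlinarith), div_le_iff₀ (by nlinarith)]
    nlinarith
  have d2 : 1 / (2 + w') * |1 / (1 + w) - 1 / (1 + w')| ≤ 0.22 * |w - w'| := by
    have : 1 / (1 + w) - 1 / (1 + w') = -(1 / ((1 + w) * (1 + w'))) * (w - w') := by
      have : 1 + w ≠ 0 := by linarith
      have : 1 + w' ≠ 0 := by linarith
      field_simp
      ring
    rw [this, abs_mul, abs_neg, ← mul_assoc]
    apply mul_le_mul_of_nonneg_right _ hs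
    have h3 : 1.909 ≤ (1 + w) * (1 + w') := by nlinarith
    rw [abs_of_nonneg (by apply div_nonneg <;> nlinarith), ← one_div_mul_one_div_rev, one_div_mul_one_div_rev, one_div_mul_one_div_rev,
      div_le_iff₀ (by nlinarith)]
    nlinarith
  have d3 : |1 / (2 + w) * h (1 / (1 + w)) - 1 / (2 + w') * h (1 / (1 + w'))|
      ≤ 0.1764 * |w - w'| * (0.52 * c) + 0.35 * c * (0.22 * |w - w'|) := by
    have : 1 / (2 + w) * h (1 / (1 + w)) - 1 / (2 + w') * h (1 / (1 + w'))
      = (1 / (2 + w) - 1 / (2 + w')) * h (1 / (1 + w)) + 1 / (2 + w') * (h (1 / (1 + w)) - h (1 / (1 + w'))) := by ring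
    rw [this]
    have hp : 0 ≤ 1 / (2 + w') := by apply div_nonneg <;> linarith
    refine (abs_add_le _ _).trans (add_le_add ?_ ?_)
    · rw [abs_mul]
      exact mul_le_mul d1 h1 (abs_nonneg _) (by positivity)
    · rw [abs_mul, abs_of_nonneg hp]
      refine (mul_le_mul_of_nonneg_left h2 hp).trans ?_
      calc _ = 0.35 * c * (1 / (2 + w') * |1 / (1 + w) - 1 / (1 + w')|) := by ring
        _ ≤ _ := mul_le_mul_of_nonneg_left d2 (by positivity)
  rw [e1, e2, add_sub_add_comm]
  refine (abs_add_le _ _).trans ((add_le_add d3 hT).trans ?_)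
  have := mul_nonneg hc hs
  nlinarith

lemma rowJ (h : ℝ → ℝ) (c : ℝ) (hc : 0 ≤ c) (hh : Hd h (1.25 * c) (0.35 * c) (0.52 * c))
    (w : ℝ) (hw : gg ^ 2 ≤ w) (hw1 : w ≤ G) :
    |V h w - V h 0| ≤ 0.52 * (c * 0.8234) := by
  have hb := q_bd
  have hGe := G_eq
  obtain ⟨s1, e1⟩ := V2 h 2 hh.m w hw hw1
  obtain ⟨s2, e2⟩ := V1 h 2 hh.m 0 le_rfl (by linarith)
  have hT12 : T1 h 0 = T2 h 0 := by
    ext k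
    simp only [T1, T2, add_zero, sub_zero]
    generalize ((2 * (k : ℝ) + 2) * (2 * k + 4)) = X
    generalize h (1 / (2 * (k : ℝ) + 3)) = Y
    ring
  rw [hT12] at s2 e2
  have hT := sumdiff _ _ s1 s2 _ (T2diff h _ _ _ hh (by positivity) w 0 hw hw1 (Or.inl rfl))
  have a := inW2 (1 + w) (by linarith) (by linarith)
  have a' := inW2 1 (by linarith) (by linarith)
  have h1 := hh.l3 _ a'.1 a'.2
  have h2 := hh.l2 _ _ a.1 a.2 a'.1 a'.2
  rw [sub_zero, abs_of_nonneg (by linarith : 0 ≤ w)] at hT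
  have hp : 0 ≤ 1 / (2 + w) := by apply div_nonneg <;> linarith
  have d1 : |1 / (2 + w) - 1 / 2| ≤ 0.224 := by
    have l : 1 / 3.6182 ≤ 1 / (2 + w) := one_div_le_one_div_of_le (by linarith) (by linarith)
    have u : 1 / (2 + w) ≤ 1 / 2 := one_div_le_one_div_of_le (by linarith) (by linarith)
    rw [abs_le]
    constructor <;> norm_num at l u ⊢ <;> linarith
  have d2 : 1 / (2 + w) * |1 / (1 + w) - 1 / 1| ≤ 0.172 := by
    have : 1 / (1 + w) - 1 / 1 = -(w / (1 + w)) := by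
      have : 1 + w ≠ 0 := by linarith
      field_simp
      ring
    rw [this, abs_neg, abs_of_nonneg (by apply div_nonneg <;> linarith), div_mul_div_comm,
      div_le_iff₀ (by nlinarith)]
    nlinarith [sq_nonneg (w - 1.414)]
  have d3 : |1 / (2 + w) * h (1 / (1 + w)) - 1 / 2 * h (1 / 1)|
      ≤ 0.224 * (0.52 * c) + 0.35 * c * 0.172 := by
    have : 1 / (2 + w) * h (1 / (1 + w)) - 1 / 2 * h (1 / 1)
      = (1 / (2 + w) - 1 / 2) * h (1 / 1) + 1 / (2 + w) * (h (1 / (1 + w)) - h (1 / 1)) := by ring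
    rw [this]
    refine (abs_add_le _ _).trans (add_le_add ?_ ?_)
    · rw [abs_mul]
      exact mul_le_mul d1 h1 (abs_nonneg _) (by positivity)
    · rw [abs_mul, abs_of_nonneg hp]
      refine (mul_le_mul_of_nonneg_left h2 hp).trans ?_
      calc _ = 0.35 * c * (1 / (2 + w) * |1 / (1 + w) - 1 / 1|) := by ring
        _ ≤ _ := mul_le_mul_of_nonneg_left d2 (by positivity)
  have e3 : V h w - V h 0 = (1 / (2 + w) * h (1 / (1 + w)) - 1 / 2 * h (1 / 1)) + (∑' k, T2 h w k - ∑' k, T2 h 0 k) := by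
    rw [e1, e2]
    norm_num
    ring
  rw [e3]
  refine (abs_add_le _ _).trans ((add_le_add d3 hT).trans ?_)
  nlinarith [mul_le_mul_of_nonneg_left (show w ≤ 1.6182 by linarith) hc]

end OCF

namespace OCF

lemma coefA (w w' : ℝ) (hw : 0 ≤ w) (hw1 : w < 0.382) (hw' : 0 ≤ w') (hw1' : w' < 0.382) :
    3 * w / ((2 + w) * (2 + w') * (1 - w ^ 2)) + (1 + w') / (2 * (2 - w') * ((1 - w) * (1 - w')))
      + (1 - w') / (2 * (2 + w') * ((1 + w) * (1 + w'))) ≤ 1.49 := by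
  have e1 : w / ((2 + w) * (1 - w ^ 2)) ≤ 0.188 := by
    rw [div_le_iff₀ (by nlinarith)]
    nlinarith [mul_nonneg hw hw, mul_nonneg (mul_nonneg hw hw) hw, mul_nonneg (mul_nonneg hw hw) (by linarith : 0 ≤ 0.382 - w)]
  have e1' : 0 ≤ w / ((2 + w) * (1 - w ^ 2)) := div_nonneg hw (by nlinarith)
  have e2 : 1 / (1 - w) ≤ 1.6182 := by
    rw [div_le_iff₀ (by linarith)]
    linarith
  have e2' : 0 ≤ 1 / (1 - w) := div_nonneg zero_le_one (by linarith)
  have e3 : 1 / (1 + w) ≤ 1 := by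
    rw [div_le_iff₀ (by linarith)]
    linarith
  have e3' : 0 ≤ 1 / (1 + w) := div_nonneg zero_le_one (by linarith)
  have s1 : 3 * w / ((2 + w) * (2 + w') * (1 - w ^ 2)) = w / ((2 + w) * (1 - w ^ 2)) * (3 / (2 + w')) := by
    rw [div_mul_div_comm]; ring
  have s2 : (1 + w') / (2 * (2 - w') * ((1 - w) * (1 - w'))) = 1 / (1 - w) * ((1 + w') / (2 * (2 - w') * (1 - w'))) := by
    rw [div_mul_div_comm]; ring
  have s3 : (1 - w') / (2 * (2 + w') * ((1 + w) * (1 + w'))) = 1 / (1 + w) * ((1 - w') / (2 * (2 + w') * (1 + w'))) := by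
    rw [div_mul_div_comm]; ring
  rw [s1, s2, s3]
  rcases le_total w' 0.3 with h | h
  · have f1 : 3 / (2 + w') ≤ 1.5 := by rw [div_le_iff₀ (by linarith)]; linarith
    have f2 : (1 + w') / (2 * (2 - w') * (1 - w')) ≤ 0.5463 := by
      rw [div_le_iff₀ (by nlinarith)]; nlinarith
    have f3 : (1 - w') / (2 * (2 + w') * (1 + w')) ≤ 0.25 := by
      rw [div_le_iff₀ (by nlinarith)]; nlinarith
    have g1 := mul_le_mul e1 f1 (div_nonneg (by norm_num) (by linarith)) (by norm_num)
    have g2 := mul_le_mul e2 f2 (div_nonneg (by linarith) (by nlinarith)) (by norm_num)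
    have g3 := mul_le_mul e3 f3 (div_nonneg (by linarith) (by nlinarith)) (by norm_num)
    norm_num at g1 g2 g3 ⊢
    linarith
  · have f1 : 3 / (2 + w') ≤ 1.3044 := by rw [div_le_iff₀ (by linarith)]; linarith
    have f2 : (1 + w') / (2 * (2 - w') * (1 - w')) ≤ 0.6912 := by
      rw [div_le_iff₀ (by nlinarith)]; nlinarith
    have f3 : (1 - w') / (2 * (2 + w') * (1 + w')) ≤ 0.1172 := by
      rw [div_le_iff₀ (by nlinarith)]; nlinarith
    have g1 := mul_le_mul e1 f1 (div_nonneg (by norm_num) (by linarith)) (by norm_num)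
    have g2 := mul_le_mul e2 f2 (div_nonneg (by linarith) (by nlinarith)) (by norm_num)
    have g3 := mul_le_mul e3 f3 (div_nonneg (by linarith) (by nlinarith)) (by norm_num)
    norm_num at g1 g2 g3 ⊢
    linarith

set_option maxHeartbeats 1000000 in
lemma rowA (h : ℝ → ℝ) (c : ℝ) (hc : 0 ≤ c) (hh : Hd h (1.25 * c) (0.35 * c) (0.52 * c))
    (w w' : ℝ) (hw : 0 ≤ w) (hw1 : w < gg ^ 2) (hw' : 0 ≤ w') (hw1' : w' < gg ^ 2) :
    |V h w - V h w'| ≤ 1.25 * (c * 0.8234) * |w - w'| := by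
  have hb := q_bd
  have hGe := G_eq
  obtain ⟨s1, e1⟩ := V1 h 2 hh.m w hw hw1
  obtain ⟨s2, e2⟩ := V1 h 2 hh.m w' hw' hw1'
  have hT := sumdiff _ _ s1 s2 _ (T1diff h _ _ _ hh (by positivity) w w' hw hw1 hw' hw1')
  have a := inW2 (1 + w) (by linarith) (by linarith)
  have a' := inW2 (1 + w') (by linarith) (by linarith)
  have b := inW2 (1 - w) (by linarith) (by linarith)
  have b' := inW2 (1 - w') (by linarith) (by linarith)
  have h1 := hh.l3 _ b.1 b.2
  have h2 := hh.l2 _ _ b.1 b.2 a.1 a.2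
  have h3 := hh.l2 _ _ b.1 b.2 b'.1 b'.2
  have h4 := hh.l2 _ _ a.1 a.2 a'.1 a'.2
  have hs := abs_nonneg (w - w')
  have n1 : 1 + w ≠ 0 := by linarith
  have n2 : 1 - w ≠ 0 := by linarith
  have n3 : 1 + w' ≠ 0 := by linarith
  have n4 : 1 - w' ≠ 0 := by linarith
  have n5 : 2 + w ≠ 0 := by linarith
  have n6 : 2 - w ≠ 0 := by linarith
  have n7 : 2 + w' ≠ 0 := by linarith
  have n8 : 2 - w' ≠ 0 := by linarith
  have p1 : 0 ≤ (1 + w') / (2 * (2 - w')) := div_nonneg (by linarith) (by linarith)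
  have p2 : 0 ≤ (1 - w') / (2 * (2 + w')) := div_nonneg (by linarith) (by linarith)
  set Pm := (1 + w) / (2 * (2 - w)) with hPm
  set Pm' := (1 + w') / (2 * (2 - w')) with hPm'
  set Pp := (1 - w) / (2 * (2 + w)) with hPp
  set Pp' := (1 - w') / (2 * (2 + w')) with hPp'
  have d0 : |(Pm - Pm') + (Pp - Pp')| ≤ 0.31 * |w - w'| := by
    have : (Pm - Pm') + (Pp - Pp') = 6 * (w + w') / ((2 - w) * (2 + w) * ((2 - w') * (2 + w'))) * (w - w') := by
      rw [hPm, hPm', hPp, hPp']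
      field_simp
      ring
    rw [this, abs_mul]
    apply mul_le_mul_of_nonneg_right _ hs
    have k1 : 3.854 ≤ (2 - w) * (2 + w) := by nlinarith
    have k2 : 3.854 ≤ (2 - w') * (2 + w') := by nlinarith
    have k3 : 14.85 ≤ (2 - w) * (2 + w) * ((2 - w') * (2 + w')) := by
      have := mul_le_mul k1 k2 (by norm_num) (by linarith)
      linarith
    rw [abs_of_nonneg (by apply div_nonneg <;> linarith), div_le_iff₀ (by linarith)]
    linarith
  have d1 : |Pp - Pp'| * |1 / (1 - w) - 1 / (1 + w)| = 3 * w / ((2 + w) * (2 + w') * (1 - w ^ 2)) * |w - w'| := by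
    have : (Pp - Pp') * (1 / (1 - w) - 1 / (1 + w)) = - (3 * w / ((2 + w) * (2 + w') * (1 - w ^ 2))) * (w - w') := by
      rw [hPp, hPp', show 1 - w ^ 2 = (1 - w) * (1 + w) by ring]
      field_simp
      ring
    rw [← abs_mul, this, abs_mul, abs_neg, abs_of_nonneg (a := 3 * w / _)]
    exact div_nonneg (by linarith) (mul_nonneg (mul_nonneg (by linarith) (by linarith)) (by nlinarith))
  have d2 : Pm' * |1 / (1 - w) - 1 / (1 - w')| = (1 + w') / (2 * (2 - w') * ((1 - w) * (1 - w'))) * |w - w'| := by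
    have : Pm' * (1 / (1 - w) - 1 / (1 - w')) = (1 + w') / (2 * (2 - w') * ((1 - w) * (1 - w'))) * (w - w') := by
      rw [hPm']
      field_simp
      ring
    rw [← abs_of_nonneg p1, ← abs_mul, this, abs_mul, abs_of_nonneg]
    exact div_nonneg (by linarith) (mul_nonneg (by linarith) (mul_nonneg (by linarith) (by linarith)))
  have d3 : Pp' * |1 / (1 + w) - 1 / (1 + w')| = (1 - w') / (2 * (2 + w') * ((1 + w) * (1 + w'))) * |w - w'| := by
    have : Pp' * (1 / (1 + w) - 1 / (1 + w')) = -((1 - w') / (2 * (2 + w') * ((1 + w) * (1 + w')))) * (w - w') := by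
      rw [hPp']
      field_simp
      ring
    rw [← abs_of_nonneg p2, ← abs_mul, this, abs_mul, abs_neg, abs_of_nonneg (a := _ / _)]
    exact div_nonneg (by linarith) (mul_nonneg (by linarith) (mul_nonneg (by linarith) (by linarith)))
  have cf := mul_le_mul_of_nonneg_right (coefA w w' hw (by linarith) hw' (by linarith)) hs
  have d4 : |(Pp * h (1 / (1 + w)) + Pm * h (1 / (1 - w))) - (Pp' * h (1 / (1 + w')) + Pm' * h (1 / (1 - w')))|
      ≤ 0.31 * |w - w'| * (0.52 * c) + 0.35 * c * (1.49 * |w - w'|) := by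
    have : (Pp * h (1 / (1 + w)) + Pm * h (1 / (1 - w))) - (Pp' * h (1 / (1 + w')) + Pm' * h (1 / (1 - w')))
      = ((Pm - Pm') + (Pp - Pp')) * h (1 / (1 - w)) + (- ((Pp - Pp') * (h (1 / (1 - w)) - h (1 / (1 + w))))
        + Pm' * (h (1 / (1 - w)) - h (1 / (1 - w'))) + Pp' * (h (1 / (1 + w)) - h (1 / (1 + w')))) := by ring
    rw [this]
    refine (abs_add_le _ _).trans (add_le_add ?_ ?_)
    · rw [abs_mul]
      exact mul_le_mul d0 h1 (abs_nonneg _) (by positivity)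
    · refine (abs_add_three _ _ _).trans ?_
      rw [abs_neg, abs_mul, abs_mul, abs_mul, abs_of_nonneg p1, abs_of_nonneg p2]
      have q1 := mul_le_mul_of_nonneg_left h2 (abs_nonneg (Pp - Pp'))
      have q2 := mul_le_mul_of_nonneg_left h3 p1
      have q3 := mul_le_mul_of_nonneg_left h4 p2
      have hc35 : 0 ≤ 0.35 * c := by positivity
      calc _ ≤ 0.35 * c * (|Pp - Pp'| * |1 / (1 - w) - 1 / (1 + w)| + Pm' * |1 / (1 - w) - 1 / (1 - w')| + Pp' * |1 / (1 + w) - 1 / (1 + w')|) := by linarith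
        _ ≤ _ := by
          apply mul_le_mul_of_nonneg_left _ hc35
          rw [d1, d2, d3, ← add_mul, ← add_mul]
          exact cf
  rw [e1, e2, add_sub_add_comm]
  refine (abs_add_le _ _).trans ((add_le_add d4 hT).trans ?_)
  have := mul_nonneg hc hs
  nlinarith

lemma contract (f : ℝ → ℝ) (c : ℝ) (hc : 0 ≤ c) (h0 : ∀ y, 0 ≤ y → y ≤ G → 0 ≤ f y ∧ f y ≤ 1)
    (hf : Bd f (1.25 * c) (0.35 * c) (0.52 * c)) :
    Bd (V f) (1.25 * (c * 0.8234)) (0.35 * (c * 0.8234)) (0.52 * (c * 0.8234)) := by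
  have hb := q_bd
  have hGe := G_eq
  have hf1 : ∀ y, 0 ≤ y → y ≤ G → |f y| ≤ 1 := fun y a b => by
    obtain ⟨u, v⟩ := h0 y a b
    rw [abs_of_nonneg u]; exact v
  have hh : Hd (fun y => f y - f 0) (1.25 * c) (0.35 * c) (0.52 * c) := by
    refine ⟨?_, ?_, ?_, ?_, ?_⟩
    · intro y a b
      obtain ⟨u, v⟩ := h0 y a b
      obtain ⟨u', v'⟩ := h0 0 le_rfl (by linarith)
      rw [abs_le]; constructor <;> linarith
    · intro y a b
      have := hf.l1 y 0 a b le_rfl (by linarith)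
      rwa [sub_zero, abs_of_nonneg a] at this
    · intro y y' a b a' b'
      simpa using hf.l1 y y' a b a' b'
    · intro y y' a b a' b'
      simpa using hf.l2 y y' a b a' b'
    · exact hf.l3
  have hV : ∀ w, 0 ≤ w → w ≤ G → V (fun y => f y - f 0) w = V f w - f 0 :=
    fun w a b => V_shift f 1 hf1 w a b (f 0)
  refine ⟨?_, ?_, ?_⟩
  · intro y y' a b a' b'
    have := rowA _ c hc hh y y' a b a' b'
    rw [hV y a (by linarith), hV y' a' (by linarith)] at this
    simpa using this
  · intro y y' a b a' b'
    have := rowB _ c hc hh y y' a b a' b'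
    rw [hV y (by linarith) b, hV y' (by linarith) b'] at this
    simpa using this
  · intro y a b
    have := rowJ _ c hc hh y a b
    rw [hV y (by linarith) b, hV 0 le_rfl (by linarith)] at this
    simpa using this

lemma V_unit (f : ℝ → ℝ) (h0 : ∀ y, 0 ≤ y → y ≤ G → 0 ≤ f y ∧ f y ≤ 1) (w : ℝ) (a : 0 ≤ w) (b : w ≤ G) :
    0 ≤ V f w ∧ V f w ≤ 1 := by
  have hf1 : ∀ y, 0 ≤ y → y ≤ G → |f y| ≤ 1 := fun y a b => by
    obtain ⟨u, v⟩ := h0 y a b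
    rw [abs_of_nonneg u]; exact v
  have hs := V_summable f 1 hf1 w a b
  have hP := P_sum w a b
  constructor
  · refine tsum_nonneg fun m => ?_
    obtain ⟨p1, p2⟩ := P_nonneg w a b m
    obtain ⟨u1, u2⟩ := u_mem w a b m
    exact add_nonneg (mul_nonneg p1 (h0 _ u1.1 u1.2).1) (mul_nonneg p2 (h0 _ u2.1 u2.2).1)
  · rw [← hP.tsum_eq]
    refine hs.tsum_le_tsum (fun m => ?_) hP.summable
    obtain ⟨p1, p2⟩ := P_nonneg w a b m
    obtain ⟨u1, u2⟩ := u_mem w a b m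
    exact add_le_add (mul_le_of_le_one_right p1 (h0 _ u1.1 u1.2).2) (mul_le_of_le_one_right p2 (h0 _ u2.1 u2.2).2)

lemma osc (f : ℝ → ℝ) (c : ℝ) (hc : 0 ≤ c) (hf : Bd f (1.25 * c) (0.35 * c) (0.52 * c))
    (y y' : ℝ) (a : 0 ≤ y) (b : y ≤ G) (a' : 0 ≤ y') (b' : y' ≤ G) : |f y - f y'| ≤ c := by
  have hb := q_bd
  have hGe := G_eq
  have key : ∀ y y', 0 ≤ y → y < gg ^ 2 → gg ^ 2 ≤ y' → y' ≤ G → |f y - f y'| ≤ c := by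
    intro y y' a b a' b'
    have h1 := hf.l1 y 0 a b le_rfl (by linarith)
    have h2 := hf.l3 y' a' b'
    rw [sub_zero, abs_of_nonneg a] at h1
    rw [abs_sub_comm] at h2
    have := abs_sub_le (f y) (f 0) (f y')
    nlinarith [mul_le_mul_of_nonneg_left (show y ≤ 0.382 by linarith) hc]
  rcases lt_or_ge y (gg ^ 2) with h | h <;> rcases lt_or_ge y' (gg ^ 2) with h' | h'
  · have := hf.l1 y y' a h a' h'
    have h3 : |y - y'| ≤ 0.382 := by rw [abs_le]; constructor <;> linarith
    nlinarith [mul_le_mul_of_nonneg_left h3 hc]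
  · exact key y y' a h h' b'
  · rw [abs_sub_comm]; exact key y' y a' h' h b
  · have := hf.l2 y y' h b h' b'
    have h3 : |y - y'| ≤ 1.2363 := by rw [abs_le]; constructor <;> linarith
    nlinarith [mul_le_mul_of_nonneg_left h3 hc]

end OCF

namespace OCF

lemma K_unit (e : ℤ) (x : ℝ) (hx : 0 ≤ x) (hx1 : x ≤ 1) (y : ℝ) (a : 0 ≤ y) (b : y ≤ G) :
    0 ≤ K e x y ∧ K e x y ≤ 1 := by
  have hb := q_bd
  have hxy := mul_nonneg hx a
  unfold K
  split_ifs with h1 h2 h2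
  · have h3 : 0 ≤ (1 - y ^ 2) * x := mul_nonneg (by nlinarith) hx
    refine ⟨div_nonneg h3 (by linarith), ?_⟩
    rw [div_le_one (by linarith)]
    nlinarith
  · refine ⟨div_nonneg (by nlinarith) (by linarith), ?_⟩
    rw [div_le_one (by linarith)]
    nlinarith
  · have h3 : 0 ≤ (1 - y ^ 2) * x := mul_nonneg (by nlinarith) hx
    have h4 : x * y ≤ 0.382 := by nlinarith
    refine ⟨div_nonneg h3 (by linarith), ?_⟩
    rw [div_le_one (by linarith)]
    nlinarith
  · exact ⟨le_rfl, zero_le_one⟩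

lemma K_Bd (e : ℤ) (x : ℝ) (hx : 0 ≤ x) (hx1 : x ≤ 1) : Bd (K e x) (1.25 * 1) (0.35 * 1) (0.52 * 1) := by
  have hb := q_bd
  have hGe := G_eq
  have hK0 : K e x 0 = x / 2 := by
    simp [K, show 0 < gg ^ 2 by linarith]
  rw [mul_one, mul_one, mul_one]
  refine ⟨?_, ?_, ?_⟩
  · intro y y' a b a' b'
    have k1 := mul_nonneg hx a
    have k2 := mul_nonneg hx a'
    have k3 := mul_nonneg a a'
    have k4 : x * y ≤ 0.382 := by nlinarith
    have k5 : x * y' ≤ 0.382 := by nlinarith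
    have k6 : y * y' ≤ 0.146 := by nlinarith
    simp only [K, if_pos b, if_pos b']
    split_ifs with h
    · have n1 : 1 + x * y ≠ 0 := by linarith
      have n2 : 1 + x * y' ≠ 0 := by linarith
      have : (1 - y ^ 2) * x / (2 * (1 + x * y)) - (1 - y' ^ 2) * x / (2 * (1 + x * y'))
        = -(x * ((y + y') + x * (1 + y * y')) / (2 * ((1 + x * y) * (1 + x * y')))) * (y - y') := by
        field_simp
        ring
      rw [this, abs_mul, abs_neg]
      apply mul_le_mul_of_nonneg_right _ (abs_nonneg _)
      have m1 : 0 ≤ y + y' + x * (1 + y * y') := by nlinarith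
      have m2 : y + y' + x * (1 + y * y') ≤ 1.91 := by nlinarith
      have m3 : x * (y + y' + x * (1 + y * y')) ≤ 1.91 := by nlinarith
      have m4 : 1 ≤ (1 + x * y) * (1 + x * y') := by nlinarith
      rw [abs_of_nonneg (div_nonneg (mul_nonneg hx m1) (by linarith)), div_le_iff₀ (by linarith)]
      linarith
    · have n1 : 1 - x * y ≠ 0 := by linarith
      have n2 : 1 - x * y' ≠ 0 := by linarith
      have : (1 - y ^ 2) * x / (2 * (1 - x * y)) - (1 - y' ^ 2) * x / (2 * (1 - x * y'))
        = (x * (x * (1 + y * y') - (y + y')) / (2 * ((1 - x * y) * (1 - x * y')))) * (y - y') := by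
        rw [div_sub_div _ _ (by simp [n1]) (by simp [n2]), div_mul_eq_mul_div, div_eq_div_iff (by simp [n1, n2]) (by simp [n1, n2])]
        ring
      rw [this, abs_mul]
      apply mul_le_mul_of_nonneg_right _ (abs_nonneg _)
      have m4 : 0.38 ≤ (1 - x * y) * (1 - x * y') := by nlinarith
      have m1 : x * (1 + y * y') - (y + y') ≤ (1 - x * y) * (1 - x * y') := by
        have : 0 ≤ (1 - x) * (1 - x * (y * y') + y + y') := mul_nonneg (by linarith) (by nlinarith)
        linarith
      have m2 : -0.764 ≤ x * (1 + y * y') - (y + y') := by nlinarith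
      have m3 : |x * (x * (1 + y * y') - (y + y'))| ≤ 2.5 * ((1 - x * y) * (1 - x * y')) := by
        rw [abs_mul, abs_of_nonneg hx]
        refine (mul_le_of_le_one_left (abs_nonneg _) hx1).trans ?_
        rw [abs_le]
        constructor <;> linarith
      rw [abs_div, abs_of_pos (by linarith : 0 < 2 * ((1 - x * y) * (1 - x * y'))), div_le_iff₀ (by linarith)]
      linarith
  · intro y y' a b a' b'
    have k1 : 0 ≤ x * y := mul_nonneg hx (by linarith)
    have k2 : 0 ≤ x * y' := mul_nonneg hx (by linarith)
    simp only [K, if_neg (not_lt.mpr a), if_neg (not_lt.mpr a')]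
    split_ifs with h
    · have n1 : 1 + x * y ≠ 0 := by linarith
      have n2 : 1 + x * y' ≠ 0 := by linarith
      have : (1 + y) * x / (1 + x * y) - (1 + y') * x / (1 + x * y')
        = (x * (1 - x) / ((1 + x * y) * (1 + x * y'))) * (y - y') := by
        rw [div_sub_div _ _ (by simp [n1]) (by simp [n2]), div_mul_eq_mul_div, div_eq_div_iff (by simp [n1, n2]) (by simp [n1, n2])]
        ring
      rw [this, abs_mul]
      apply mul_le_mul_of_nonneg_right _ (abs_nonneg _)
      have m4 : 1 ≤ (1 + x * y) * (1 + x * y') := by nlinarith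
      rw [abs_of_nonneg (div_nonneg (mul_nonneg hx (by linarith)) (by linarith)), div_le_iff₀ (by linarith)]
      nlinarith [sq_nonneg (x - 1 / 2)]
    · rw [sub_zero, abs_zero]
      positivity
  · intro y a b
    have k1 : 0 ≤ x * y := mul_nonneg hx (by linarith)
    rw [hK0]
    simp only [K, if_neg (not_lt.mpr a)]
    split_ifs with h
    · have l : x / 2 ≤ (1 + y) * x / (1 + x * y) := by
        rw [le_div_iff₀ (by linarith)]
        nlinarith
      have u : (1 + y) * x / (1 + x * y) ≤ 0.52 + x / 2 := by
        rw [div_le_iff₀ (by linarith)]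
        have hy : y ≤ 1.6181 := by linarith
        nlinarith [mul_nonneg (mul_nonneg hx (by linarith : 0 ≤ 1.6181 - y)) (by linarith : 0 ≤ 1 - x), mul_nonneg hx (by linarith : 0 ≤ 1.6181 - y), sq_nonneg (x - 0.78), sq_nonneg (x - 0.8)]
      rw [abs_le]
      constructor <;> linarith
    · rw [abs_le]
      constructor <;> linarith

lemma K_meas (e : ℤ) (x : ℝ) : Measurable (K e x) := by
  unfold K
  split_ifs
  · exact Measurable.ite measurableSet_Iio (by fun_prop) (by fun_prop)
  · exact Measurable.ite measurableSet_Iio (by fun_prop) (by fun_prop)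

end OCF

namespace OCF

lemma q_def_lt : 1 < G := by
  have hb := q_bd
  have hGe := G_eq
  linarith

/-- real density -/
noncomputable def rho (w : ℝ) : ℝ := (3 * Real.log G)⁻¹ *
      (if w < gg ^ 2 then 1 / (1 + w) + 1 / (1 - w) else 1 / (1 + w))

lemma c0_pos : 0 < (3 * Real.log G)⁻¹ := by
  have := Real.log_pos q_def_lt
  positivity

lemma rho_nonneg (w : ℝ) (h0 : 0 ≤ w) : 0 ≤ rho w := by
  have hb := q_bd
  unfold rho
  refine mul_nonneg c0_pos.le ?_
  split_ifs with h
  · exact add_nonneg (div_nonneg zero_le_one (by linarith)) (div_nonneg zero_le_one (by linarith))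
  · exact div_nonneg zero_le_one (by linarith)

lemma rho_meas : Measurable rho := by
  unfold rho
  exact measurable_const.mul (Measurable.ite measurableSet_Iio (by fun_prop) (by fun_prop))

lemma PF_meas (e i : ℤ) : Measurable (fun w => PF w e i) := by
  unfold PF
  exact Measurable.ite measurableSet_Iio (by fun_prop) (by fun_prop)

lemma uF_meas (e i : ℤ) : Measurable (fun w => uF w e i) := by
  unfold uF
  split_ifs
  · fun_prop
  · exact Measurable.ite measurableSet_Iio (by fun_prop) (by fun_prop)

noncomputable def bb (m : ℕ) : ℝ := 1 / (2 * m + 1 - gg ^ 2)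

lemma rho1 (y : ℝ) (h0 : 0 ≤ y) (h : y < gg ^ 2) : rho y = (3 * Real.log G)⁻¹ * (2 / (1 - y ^ 2)) := by
  have hb := q_bd
  rw [rho, if_pos h]
  have n1 : 1 + y ≠ 0 := by linarith
  have n2 : 1 - y ≠ 0 := by linarith
  rw [show 1 - y ^ 2 = (1 + y) * (1 - y) by ring, div_add_div _ _ n1 n2]
  ring

lemma rho2 (y : ℝ) (h : gg ^ 2 ≤ y) : rho y = (3 * Real.log G)⁻¹ * (1 / (1 + y)) := by
  rw [rho, if_neg (not_lt.mpr h)]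

/-- weight of a transformed branch -/
lemma tr1 (t : ℝ) (ht : 3 - gg ^ 2 < t) :
    1 / t ^ 2 * rho (1 / t) = (3 * Real.log G)⁻¹ * (2 / ((t - 1) * (t + 1))) := by
  have hb := q_bd
  obtain ⟨a, b⟩ := inW1 t ht
  rw [rho1 _ a b]
  have n1 : t ≠ 0 := by linarith
  have n2 : t - 1 ≠ 0 := by linarith
  have n3 : t + 1 ≠ 0 := by linarith
  have : 1 - (1 / t) ^ 2 = (t - 1) * (t + 1) / t ^ 2 := by field_simp; ring
  rw [this]
  field_simp

lemma tr2 (t : ℝ) (ht : 1 - gg ^ 2 ≤ t) (ht' : t ≤ 3 - gg ^ 2) :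
    1 / t ^ 2 * rho (1 / t) = (3 * Real.log G)⁻¹ * (1 / (t * (t + 1))) := by
  have hb := q_bd
  obtain ⟨a, b⟩ := inW2 t ht ht'
  rw [rho2 _ a]
  have n1 : t ≠ 0 := by linarith
  have n3 : t + 1 ≠ 0 := by linarith
  have : 1 + 1 / t = (t + 1) / t := by field_simp
  rw [this]
  field_simp

lemma wt_p (w : ℝ) (h0 : 0 < w) (hG : w < G) (m : ℕ) :
    1 / (2 * m + 1 + w) ^ 2 * rho (1 / (2 * m + 1 + w)) = rho w * PF w 1 (2 * (m : ℤ) + 1) := by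
  have hb := q_bd
  have hGe := G_eq
  have n1 : 1 + w ≠ 0 := by linarith
  have n2 : 2 + w ≠ 0 := by linarith
  rcases m with _ | k
  · rw [tr2 _ (by push_cast; linarith) (by push_cast; linarith)]
    rcases lt_or_ge w (gg ^ 2) with h | h
    · rw [rho1 _ h0.le h, P_p0 w h h0.le]
      have n3 : 1 - w ≠ 0 := by linarith
      rw [show 1 - w ^ 2 = (1 + w) * (1 - w) by ring, mul_assoc]
      congr 1
      push_cast
      rw [show 2 * (0 : ℝ) + 1 + w = 1 + w by ring, show 1 + w + 1 = 2 + w by ring]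
      field_simp
    · rw [rho2 _ h, P2_0 w h, mul_assoc]
      congr 1
      push_cast
      rw [show 2 * (0 : ℝ) + 1 + w = 1 + w by ring, show 1 + w + 1 = 2 + w by ring]
      field_simp
  · have hk : (0 : ℝ) ≤ k := by positivity
    rw [tr1 _ (by push_cast; linarith)]
    have n4 : 2 * (k : ℝ) + 2 + w ≠ 0 := by linarith
    have n5 : 2 * (k : ℝ) + 4 + w ≠ 0 := by linarith
    rcases lt_or_ge w (gg ^ 2) with h | h
    · rw [rho1 _ h0.le h, P_ps w h h0.le, mul_assoc]
      have n3 : 1 - w ^ 2 ≠ 0 := by nlinarith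
      congr 1
      push_cast
      rw [show (2 * ((k : ℝ) + 1) + 1 + w - 1) = 2 * k + 2 + w by ring,
        show (2 * ((k : ℝ) + 1) + 1 + w + 1) = 2 * k + 4 + w by ring]
      field_simp
    · rw [rho2 _ h, P2_s w h, mul_assoc]
      congr 1
      push_cast
      rw [show (2 * ((k : ℝ) + 1) + 1 + w - 1) = 2 * k + 2 + w by ring,
        show (2 * ((k : ℝ) + 1) + 1 + w + 1) = 2 * k + 4 + w by ring]
      field_simp

lemma wt_m (w : ℝ) (h0 : 0 < w) (h : w < gg ^ 2) (m : ℕ) :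
    1 / (2 * m + 1 - w) ^ 2 * rho (1 / (2 * m + 1 - w)) = rho w * PF w (-1) (2 * (m : ℤ) + 1) := by
  have hb := q_bd
  have hGe := G_eq
  have n1 : 1 + w ≠ 0 := by linarith
  have n2 : 2 - w ≠ 0 := by linarith
  rw [rho1 _ h0.le h]
  rcases m with _ | k
  · rw [tr2 _ (by push_cast; linarith) (by push_cast; linarith)]
    · rw [P_m0 w h h0.le]
      have n3 : 1 - w ≠ 0 := by linarith
      rw [show 1 - w ^ 2 = (1 + w) * (1 - w) by ring, mul_assoc]
      congr 1
      push_cast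
      rw [show 2 * (0 : ℝ) + 1 - w = 1 - w by ring, show 1 - w + 1 = 2 - w by ring]
      field_simp
  · have hk : (0 : ℝ) ≤ k := by positivity
    rw [tr1 _ (by push_cast; linarith)]
    have n4 : 2 * (k : ℝ) + 2 - w ≠ 0 := by linarith
    have n5 : 2 * (k : ℝ) + 4 - w ≠ 0 := by linarith
    · rw [P_ms w h h0.le, mul_assoc]
      have n3 : 1 - w ^ 2 ≠ 0 := by nlinarith
      congr 1
      push_cast
      rw [show (2 * ((k : ℝ) + 1) + 1 - w - 1) = 2 * k + 2 - w by ring,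
        show (2 * ((k : ℝ) + 1) + 1 - w + 1) = 2 * k + 4 - w by ring]
      field_simp

lemma cov_p (φ : ℝ → ℝ≥0∞) (m : ℕ) :
    ∫⁻ w in Ioo 0 G, ENNReal.ofReal (rho w) * (ENNReal.ofReal (PF w 1 (2 * (m : ℤ) + 1)) * φ (uF w 1 (2 * (m : ℤ) + 1)))
    = ∫⁻ y in Ioo (bb (m + 1)) (1 / (2 * (m : ℝ) + 1)), ENNReal.ofReal (rho y) * φ y := by
  have hb := q_bd
  have hGe := G_eq
  have hm : (0 : ℝ) ≤ m := by positivity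
  have him : (fun w : ℝ => 1 / (2 * (m : ℝ) + 1 + w)) '' Ioo 0 G = Ioo (bb (m + 1)) (1 / (2 * (m : ℝ) + 1)) := by
    ext y
    simp only [mem_image, mem_Ioo, bb]
    push_cast
    rw [show 2 * ((m : ℝ) + 1) + 1 - gg ^ 2 = 2 * m + 1 + G by rw [hGe]; ring]
    constructor
    · rintro ⟨w, ⟨h1, h2⟩, rfl⟩
      exact ⟨one_div_lt_one_div_of_lt (by linarith) (by linarith), one_div_lt_one_div_of_lt (by linarith) (by linarith)⟩
    · rintro ⟨h1, h2⟩
      have hy : 0 < y := lt_trans (by apply div_pos <;> linarith) h1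
      refine ⟨1 / y - (2 * m + 1), ⟨?_, ?_⟩, ?_⟩
      · have := (lt_one_div hy (by linarith)).mp h2
        linarith
      · have := (one_div_lt (by linarith) hy).mp h1
        linarith
      · rw [show 2 * (m : ℝ) + 1 + (1 / y - (2 * m + 1)) = 1 / y by ring, one_div_one_div]
  rw [← him, lintegral_image_eq_lintegral_abs_deriv_mul (f' := fun w => -1 / (2 * (m : ℝ) + 1 + w) ^ 2) measurableSet_Ioo]
  · refine setLIntegral_congr_fun measurableSet_Ioo ?_
    intro w hw
    have h1 : |-1 / (2 * (m : ℝ) + 1 + w) ^ 2| = 1 / (2 * (m : ℝ) + 1 + w) ^ 2 := by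
      rw [abs_div, abs_neg, abs_one, abs_of_nonneg (by positivity)]
    simp only []
    rw [h1, u_p, ← mul_assoc, ← mul_assoc, ← ENNReal.ofReal_mul (rho_nonneg w hw.1.le),
      ← ENNReal.ofReal_mul (by positivity), wt_p w hw.1 hw.2]
  · intro w hw
    have h2 : 2 * (m : ℝ) + 1 + w ≠ 0 := by have := hw.1; linarith
    have := ((hasDerivAt_id w).const_add (2 * (m : ℝ) + 1)).inv h2
    simp only [one_div]
    exact this.hasDerivWithinAt
  · intro a ha b hb' hab
    simp only [one_div, inv_inj] at hab
    linarith

lemma cov_m (φ : ℝ → ℝ≥0∞) (m : ℕ) :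
    ∫⁻ w in Ioo 0 (gg ^ 2), ENNReal.ofReal (rho w) * (ENNReal.ofReal (PF w (-1) (2 * (m : ℤ) + 1)) * φ (uF w (-1) (2 * (m : ℤ) + 1)))
    = ∫⁻ y in Ioo (1 / (2 * (m : ℝ) + 1)) (bb m), ENNReal.ofReal (rho y) * φ y := by
  have hb := q_bd
  have hm : (0 : ℝ) ≤ m := by positivity
  have him : (fun w : ℝ => 1 / (2 * (m : ℝ) + 1 - w)) '' Ioo 0 (gg ^ 2) = Ioo (1 / (2 * (m : ℝ) + 1)) (bb m) := by
    ext y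
    simp only [mem_image, mem_Ioo, bb]
    constructor
    · rintro ⟨w, ⟨h1, h2⟩, rfl⟩
      exact ⟨one_div_lt_one_div_of_lt (by linarith) (by linarith), one_div_lt_one_div_of_lt (by linarith) (by linarith)⟩
    · rintro ⟨h1, h2⟩
      have hy : 0 < y := lt_trans (by apply div_pos <;> linarith) h1
      refine ⟨2 * m + 1 - 1 / y, ⟨?_, ?_⟩, ?_⟩
      · have := (one_div_lt (by linarith) hy).mp h1
        linarith
      · have := (lt_one_div hy (by linarith)).mp h2
        linarith
      · rw [show 2 * (m : ℝ) + 1 - (2 * m + 1 - 1 / y) = 1 / y by ring, one_div_one_div]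
  rw [← him, lintegral_image_eq_lintegral_abs_deriv_mul (f' := fun w => -(-1) / (2 * (m : ℝ) + 1 - w) ^ 2) measurableSet_Ioo]
  · refine setLIntegral_congr_fun measurableSet_Ioo ?_
    intro w hw
    have h1 : |-(-1) / (2 * (m : ℝ) + 1 - w) ^ 2| = 1 / (2 * (m : ℝ) + 1 - w) ^ 2 := by
      rw [abs_div, neg_neg, abs_one, abs_of_nonneg (by positivity)]
    simp only []
    rw [h1, u_m w hw.2, ← mul_assoc, ← mul_assoc, ← ENNReal.ofReal_mul (rho_nonneg w hw.1.le),
      ← ENNReal.ofReal_mul (by positivity), wt_m w hw.1 hw.2]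
  · intro w hw
    have h2 : 2 * (m : ℝ) + 1 - w ≠ 0 := by have := hw.2; linarith
    have := ((hasDerivAt_id w).const_sub (2 * (m : ℝ) + 1)).inv h2
    simp only [one_div]
    exact this.hasDerivWithinAt
  · intro a ha b hb' hab
    simp only [one_div, inv_inj] at hab
    linarith

lemma bb_zero : bb 0 = G := by
  have hb := q_bd
  have he := q_eq
  rw [bb, G_eq, div_eq_iff (by push_cast; linarith)]
  push_cast
  linarith

lemma bb_anti : Antitone bb := by
  have hb := q_bd
  intro a b hab
  have h1 : (0 : ℝ) ≤ a := by positivity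
  have : (a : ℝ) ≤ b := by exact_mod_cast hab
  exact one_div_le_one_div_of_le (by linarith) (by linarith)

lemma bb_pos (m : ℕ) : 0 < bb m := by
  have hb := q_bd
  have h1 : (0 : ℝ) ≤ m := by positivity
  exact div_pos one_pos (by linarith)

lemma bb_union : ⋃ m, Ioc (bb (m + 1)) (bb m) = Ioc 0 G := by
  have hb := q_bd
  ext y
  simp only [mem_iUnion, mem_Ioc]
  constructor
  · rintro ⟨m, h1, h2⟩
    refine ⟨(bb_pos _).trans h1, h2.trans ?_⟩
    rw [← bb_zero]
    exact bb_anti (Nat.zero_le m)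
  · rintro ⟨h1, h2⟩
    have hex : ∃ m, bb m < y := by
      obtain ⟨n, hn⟩ := exists_nat_gt (1 / y)
      refine ⟨n, ?_⟩
      have : (0 : ℝ) ≤ n := by positivity
      rw [bb, one_div_lt (by linarith) h1]
      linarith
    have hs := Nat.find_spec hex
    have hmin := fun k => Nat.find_min hex (m := k)
    obtain ⟨k, hk⟩ : ∃ k, Nat.find hex = k + 1 := by
      refine Nat.exists_eq_succ_of_ne_zero ?_
      intro h
      rw [h, bb_zero] at hs
      linarith
    rw [hk] at hs
    exact ⟨k, hs, not_lt.mp (hmin k (by omega))⟩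

lemma Qinf_lint (φ : ℝ → ℝ≥0∞) (hφ : Measurable φ) :
    ∫⁻ w, φ w ∂Qinf = ∫⁻ w in Ioo 0 G, ENNReal.ofReal (rho w) * φ w := by
  have : Qinf = (volume.restrict (Set.Icc (0 : ℝ) G)).withDensity (fun w => ENNReal.ofReal (rho w)) := rfl
  rw [this, lintegral_withDensity_eq_lintegral_mul _ rho_meas.ennreal_ofReal hφ,
    setLIntegral_congr Ioo_ae_eq_Icc.symm]
  rfl

lemma S_meas (φ : ℝ → ℝ≥0∞) (hφ : Measurable φ) :
    Measurable (fun w => ∑' m : ℕ, (ENNReal.ofReal (PF w 1 (2 * (m : ℤ) + 1)) * φ (uF w 1 (2 * (m : ℤ) + 1))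
      + ENNReal.ofReal (PF w (-1) (2 * (m : ℤ) + 1)) * φ (uF w (-1) (2 * (m : ℤ) + 1)))) := by
  have m1 : ∀ e i, Measurable (fun w => ENNReal.ofReal (PF w e i) * φ (uF w e i)) := fun e i =>
    (PF_meas e i).ennreal_ofReal.mul (hφ.comp (uF_meas e i))
  exact Measurable.ennreal_tsum fun m => (m1 _ _).add (m1 _ _)

lemma stationary (φ : ℝ → ℝ≥0∞) (hφ : Measurable φ) :
    ∫⁻ w, (∑' m : ℕ, (ENNReal.ofReal (PF w 1 (2 * (m : ℤ) + 1)) * φ (uF w 1 (2 * (m : ℤ) + 1))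
      + ENNReal.ofReal (PF w (-1) (2 * (m : ℤ) + 1)) * φ (uF w (-1) (2 * (m : ℤ) + 1)))) ∂Qinf = ∫⁻ w, φ w ∂Qinf := by
  have hb := q_bd
  have hGe := G_eq
  have m1 : ∀ e i, Measurable (fun w => ENNReal.ofReal (PF w e i) * φ (uF w e i)) := fun e i =>
    (PF_meas e i).ennreal_ofReal.mul (hφ.comp (uF_meas e i))
  rw [Qinf_lint _ hφ, Qinf_lint _ (S_meas φ hφ)]
  simp_rw [← ENNReal.tsum_mul_left, mul_add]
  have m2 : ∀ e i, Measurable (fun w => ENNReal.ofReal (rho w) * (ENNReal.ofReal (PF w e i) * φ (uF w e i))) :=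
    fun e i => rho_meas.ennreal_ofReal.mul (m1 e i)
  rw [lintegral_tsum]
  swap
  · intro m
    exact ((m2 _ _).add (m2 _ _)).aemeasurable
  rw [setLIntegral_congr (Ioo_ae_eq_Ioc (a := (0:ℝ)) (b := G)), ← bb_union, lintegral_iUnion (fun m => measurableSet_Ioc)
    (by exact bb_anti.pairwise_disjoint_on_Ioc_succ)]
  congr 1
  ext m
  rw [lintegral_add_left (m2 _ _), cov_p]
  have hm : (0 : ℝ) ≤ m := by positivity
  have l1 : bb (m + 1) ≤ 1 / (2 * (m : ℝ) + 1) := by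
    rw [bb]
    push_cast
    exact one_div_le_one_div_of_le (by linarith) (by linarith)
  have l2 : 1 / (2 * (m : ℝ) + 1) ≤ bb m := one_div_le_one_div_of_le (by linarith) (by linarith)
  rw [← Ioc_union_Ioc_eq_Ioc l1 l2, lintegral_union measurableSet_Ioc (Ioc_disjoint_Ioc_of_le le_rfl),
    setLIntegral_congr (Ioo_ae_eq_Ioc (a := bb (m + 1))), ← setLIntegral_congr (Ioo_ae_eq_Ioc (a := 1 / (2 * (m : ℝ) + 1)) (b := bb m)), ← cov_m]
  congr 1
  have : Ioo 0 (gg ^ 2) = Iio (gg ^ 2) ∩ Ioo 0 G := by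
    ext y
    simp only [mem_inter_iff, mem_Ioo, mem_Iio]
    constructor
    · rintro ⟨a, b⟩
      exact ⟨b, a, by linarith⟩
    · rintro ⟨a, b, c⟩
      exact ⟨b, a⟩
  rw [this, ← setLIntegral_indicator measurableSet_Iio]
  congr 1
  ext w
  by_cases h : w < gg ^ 2
  · rw [indicator_of_mem (by exact h)]
  · rw [indicator_of_notMem (by exact h), P2_m w (not_lt.mp h)]
    simp

lemma ftc_lint (F f : ℝ → ℝ) (a b : ℝ) (hab : a ≤ b) (hd : ∀ x ∈ Icc a b, HasDerivAt F (f x) x)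
    (hc : ContinuousOn f (Icc a b)) (hn : ∀ x ∈ Icc a b, 0 ≤ f x) :
    ∫⁻ x in Ioo a b, ENNReal.ofReal (f x) = ENNReal.ofReal (F b - F a) := by
  have hi : IntegrableOn f (Icc a b) := hc.integrableOn_Icc
  rw [setLIntegral_congr Ioo_ae_eq_Icc, ← ofReal_integral_eq_lintegral_ofReal hi
    (by filter_upwards [ae_restrict_mem measurableSet_Icc] with x hx using hn x hx),
    integral_Icc_eq_integral_Ioc, ← intervalIntegral.integral_of_le hab,
    intervalIntegral.integral_eq_sub_of_hasDerivAt (by rwa [uIcc_of_le hab])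
      ((intervalIntegrable_iff_integrableOn_Icc_of_le hab).mpr hi)]

lemma Qinf_univ : Qinf univ = 1 := by
  have hb := q_bd
  have he := q_eq
  have hGe := G_eq
  have hc := c0_pos
  have hl := Real.log_pos q_def_lt
  rw [← lintegral_one, Qinf_lint _ measurable_const]
  have hsum : ∀ w ∈ Ioo 0 G, ENNReal.ofReal (rho w) * 1 = ENNReal.ofReal ((3 * Real.log G)⁻¹ * (1 / (1 + w)))
      + (Iio (gg ^ 2)).indicator (fun w => ENNReal.ofReal ((3 * Real.log G)⁻¹ * (1 / (1 - w)))) w := by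
    intro w hw
    rw [mul_one]
    have h1 : 0 ≤ 1 / (1 + w) := div_nonneg zero_le_one (by linarith [hw.1])
    by_cases h : w < gg ^ 2
    · have h2 : 0 ≤ 1 / (1 - w) := div_nonneg zero_le_one (by linarith)
      rw [indicator_of_mem (by exact h), ← ENNReal.ofReal_add (by positivity) (by positivity), rho, if_pos h, mul_add]
    · rw [indicator_of_notMem (by exact h), add_zero, rho, if_neg h]
  rw [setLIntegral_congr_fun measurableSet_Ioo hsum, lintegral_add_left (by fun_prop),
    setLIntegral_indicator measurableSet_Iio]
  have : Iio (gg ^ 2) ∩ Ioo 0 G = Ioo 0 (gg ^ 2) := by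
    ext y
    simp only [mem_inter_iff, mem_Ioo, mem_Iio]
    constructor
    · rintro ⟨a, b, c⟩
      exact ⟨b, a⟩
    · rintro ⟨a, b⟩
      exact ⟨b, a, by linarith⟩
  rw [this, ftc_lint (fun w => (3 * Real.log G)⁻¹ * Real.log (1 + w)) _ 0 G (by linarith),
    ftc_lint (fun w => (3 * Real.log G)⁻¹ * (- Real.log (1 - w))) _ 0 (gg ^ 2) (by linarith)]
  · have e1 : Real.log (1 + G) = 2 * Real.log G := by
      have : 1 + G = G ^ 2 := by rw [hGe]; linarith
      rw [this, Real.log_pow]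
      norm_num
    have e2 : Real.log (1 - gg ^ 2) = - Real.log G := by
      have : 1 - gg ^ 2 = G⁻¹ := by
        apply eq_inv_of_mul_eq_one_left
        rw [hGe]
        linarith
      rw [this, Real.log_inv]
    simp only [add_zero, sub_zero, Real.log_one, neg_zero, mul_zero]
    rw [e1, e2, ← ENNReal.ofReal_add (by positivity) (by rw [neg_neg]; positivity), ENNReal.ofReal_eq_one]
    field_simp
    norm_num
  · intro x hx
    have h2 : 1 - x ≠ 0 := by linarith [hx.2]
    have := ((((hasDerivAt_id x).const_sub 1).log h2).neg).const_mul (3 * Real.log G)⁻¹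
    exact this.congr_deriv (by simp [neg_div])
  · apply ContinuousOn.mul continuousOn_const
    apply ContinuousOn.div continuousOn_const (by fun_prop)
    intro x hx
    linarith [hx.2]
  · intro x hx
    exact mul_nonneg hc.le (div_nonneg zero_le_one (by linarith [hx.2]))
  · intro x hx
    have h2 : 1 + x ≠ 0 := by linarith [hx.1]
    have := (((hasDerivAt_id x).const_add 1).log h2).const_mul (3 * Real.log G)⁻¹
    exact this
  · apply ContinuousOn.mul continuousOn_const
    apply ContinuousOn.div continuousOn_const (by fun_prop)
    intro x hx
    linarith [hx.1]
  · intro x hx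
    exact mul_nonneg hc.le (div_nonneg zero_le_one (by linarith [hx.1]))

end OCF

namespace OCF

noncomputable def kap (e : ℤ) (x : ℝ) (n : ℕ) (w : ℝ) : ℝ≥0∞ := ∫⁻ y, ENNReal.ofReal (K e x y) ∂(Qiter n w)

lemma kap_zero (e : ℤ) (x : ℝ) : kap e x 0 = fun w => ENNReal.ofReal (K e x w) := by
  ext w
  rw [kap, Qiter, lintegral_dirac' _ (K_meas e x).ennreal_ofReal]

lemma kap_succ (e : ℤ) (x : ℝ) (n : ℕ) : kap e x (n + 1) = fun w =>
    ∑' m : ℕ, (ENNReal.ofReal (PF w 1 (2 * (m : ℤ) + 1)) * kap e x n (uF w 1 (2 * (m : ℤ) + 1))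
      + ENNReal.ofReal (PF w (-1) (2 * (m : ℤ) + 1)) * kap e x n (uF w (-1) (2 * (m : ℤ) + 1))) := by
  ext w
  rw [kap, Qiter, lintegral_sum_measure]
  congr 1
  ext m
  rw [lintegral_add_measure, lintegral_smul_measure, lintegral_smul_measure]
  rfl

lemma kap_meas (e : ℤ) (x : ℝ) (n : ℕ) : Measurable (kap e x n) := by
  induction n with
  | zero => rw [kap_zero]; exact (K_meas e x).ennreal_ofReal
  | succ n ih => rw [kap_succ]; exact S_meas _ ih

lemma kap_int (e : ℤ) (x : ℝ) (n : ℕ) : ∫⁻ w, kap e x n w ∂Qinf = ∫⁻ w, ENNReal.ofReal (K e x w) ∂Qinf := by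
  induction n with
  | zero => rw [kap_zero]
  | succ n ih => rw [kap_succ, stationary _ (kap_meas e x n), ih]

noncomputable def fn (e : ℤ) (x : ℝ) : ℕ → ℝ → ℝ
  | 0 => K e x
  | n + 1 => V (fn e x n)

lemma fn_unit (e : ℤ) (x : ℝ) (hx : 0 ≤ x) (hx1 : x ≤ 1) (n : ℕ) :
    ∀ y, 0 ≤ y → y ≤ G → 0 ≤ fn e x n y ∧ fn e x n y ≤ 1 := by
  induction n with
  | zero => exact K_unit e x hx hx1
  | succ n ih => exact V_unit _ ih

lemma fn_Bd (e : ℤ) (x : ℝ) (hx : 0 ≤ x) (hx1 : x ≤ 1) (n : ℕ) :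
    Bd (fn e x n) (1.25 * 0.8234 ^ n) (0.35 * 0.8234 ^ n) (0.52 * 0.8234 ^ n) := by
  induction n with
  | zero => exact K_Bd e x hx hx1
  | succ n ih =>
    rw [pow_succ]
    exact contract _ _ (by positivity) (fn_unit e x hx hx1 n) ih

lemma kap_fn (e : ℤ) (x : ℝ) (hx : 0 ≤ x) (hx1 : x ≤ 1) (n : ℕ) :
    ∀ w, 0 ≤ w → w ≤ G → kap e x n w = ENNReal.ofReal (fn e x n w) := by
  induction n with
  | zero => intro w _ _; rw [kap_zero]; rfl
  | succ n ih =>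
    intro w a b
    have hu := fn_unit e x hx hx1 n
    have hf1 : ∀ y, 0 ≤ y → y ≤ G → |fn e x n y| ≤ 1 := fun y a b => by
      obtain ⟨u, v⟩ := hu y a b
      rw [abs_of_nonneg u]; exact v
    have hs := V_summable _ 1 hf1 w a b
    rw [kap_succ]
    simp only [fn]
    rw [V, ENNReal.ofReal_tsum_of_nonneg _ hs]
    · congr 1
      ext m
      obtain ⟨p1, p2⟩ := P_nonneg w a b m
      obtain ⟨u1, u2⟩ := u_mem w a b m
      rw [ENNReal.ofReal_add (mul_nonneg p1 (hu _ u1.1 u1.2).1) (mul_nonneg p2 (hu _ u2.1 u2.2).1),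
        ENNReal.ofReal_mul p1, ENNReal.ofReal_mul p2, ih _ u1.1 u1.2, ih _ u2.1 u2.2]
    · intro m
      obtain ⟨p1, p2⟩ := P_nonneg w a b m
      obtain ⟨u1, u2⟩ := u_mem w a b m
      exact add_nonneg (mul_nonneg p1 (hu _ u1.1 u1.2).1) (mul_nonneg p2 (hu _ u2.1 u2.2).1)

lemma Qiter_supp (n : ℕ) : ∀ w, 0 ≤ w → w ≤ G → Qiter n w (Icc 0 G)ᶜ = 0 := by
  induction n with
  | zero =>
    intro w a b
    rw [Qiter, Measure.dirac_apply' _ measurableSet_Icc.compl, indicator_of_notMem]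
    simpa using ⟨a, b⟩
  | succ n ih =>
    intro w a b
    rw [Qiter, Measure.sum_apply _ measurableSet_Icc.compl, ENNReal.tsum_eq_zero]
    intro m
    obtain ⟨u1, u2⟩ := u_mem w a b m
    rw [Measure.add_apply, Measure.smul_apply, Measure.smul_apply, ih _ u1.1 u1.2, ih _ u2.1 u2.2]
    simp

lemma Qinf_ae : ∀ᵐ y ∂Qinf, y ∈ Icc 0 G := by
  have : Qinf ≪ volume.restrict (Set.Icc (0 : ℝ) G) := withDensity_absolutelyContinuous _ _
  exact this.ae_le (ae_restrict_mem measurableSet_Icc)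

end OCF

/-- With `θ = 0.8234`, for every `n ≥ 1`, every `w ∈ W`, every `x ∈ [0,1]` and every
`e ∈ {-1,1}`, `|Fₙʷ(x,e) - F(x,e)| ≤ θⁿ`, where `Fₙʷ(x,e) = ∫_W K_e(x,y) Qⁿ(w,dy)` and
`F(x,e) = ∫_W K_e(x,y) Q∞(dy)`. -/
theorem ocf_Fn_convergence (n : ℕ) (hn : 1 ≤ n) (w : ℝ) (hw : w ∈ Set.Icc (0 : ℝ) G)
    (x : ℝ) (hx : x ∈ Set.Icc (0 : ℝ) 1) (e : ℤ) (he : e = 1 ∨ e = -1) :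
    |(∫ y, K e x y ∂(Qiter n w)) - ∫ y, K e x y ∂Qinf| ≤ 0.8234 ^ n := by
  obtain ⟨hw0, hwG⟩ := hw
  obtain ⟨hx0, hx1⟩ := hx
  have hKm : ∀ μ : Measure ℝ, AEStronglyMeasurable (K e x) μ := fun μ => (K_meas e x).aestronglyMeasurable
  have h1 : ∫ y, K e x y ∂(Qiter n w) = fn e x n w := by
    rw [integral_eq_lintegral_of_nonneg_ae _ (hKm _)]
    · have := kap_fn e x hx0 hx1 n w hw0 hwG
      rw [kap] at this
      rw [this, ENNReal.toReal_ofReal (fn_unit e x hx0 hx1 n w hw0 hwG).1]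
    · have : ∀ᵐ y ∂(Qiter n w), y ∈ Icc 0 G := Qiter_supp n w hw0 hwG
      filter_upwards [this] with y hy
      exact (K_unit e x hx0 hx1 y hy.1 hy.2).1
  have h2 : ∫ y, K e x y ∂Qinf = (∫⁻ y, kap e x n y ∂Qinf).toReal := by
    rw [integral_eq_lintegral_of_nonneg_ae _ (hKm _), kap_int]
    filter_upwards [Qinf_ae] with y hy
    exact (K_unit e x hx0 hx1 y hy.1 hy.2).1
  have hosc : ∀ y ∈ Icc 0 G, |fn e x n y - fn e x n w| ≤ 0.8234 ^ n := fun y hy =>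
    osc _ _ (by positivity) (fn_Bd e x hx0 hx1 n) y w hy.1 hy.2 hw0 hwG
  have hθ : (0 : ℝ) ≤ 0.8234 ^ n := by positivity
  have hf0 := (fn_unit e x hx0 hx1 n w hw0 hwG).1
  have hup : ∫⁻ y, kap e x n y ∂Qinf ≤ ENNReal.ofReal (fn e x n w + 0.8234 ^ n) := by
    calc _ ≤ ∫⁻ y, ENNReal.ofReal (fn e x n w + 0.8234 ^ n) ∂Qinf := by
          apply lintegral_mono_ae
          filter_upwards [Qinf_ae] with y hy
          rw [kap_fn e x hx0 hx1 n y hy.1 hy.2]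
          apply ENNReal.ofReal_le_ofReal
          linarith [(abs_le.mp (hosc y hy)).2]
      _ = _ := by rw [lintegral_const, Qinf_univ, mul_one]
  have hlo : ENNReal.ofReal (fn e x n w - 0.8234 ^ n) ≤ ∫⁻ y, kap e x n y ∂Qinf := by
    calc _ = ∫⁻ y, ENNReal.ofReal (fn e x n w - 0.8234 ^ n) ∂Qinf := by
          rw [lintegral_const, Qinf_univ, mul_one]
      _ ≤ _ := by
          apply lintegral_mono_ae
          filter_upwards [Qinf_ae] with y hy
          rw [kap_fn e x hx0 hx1 n y hy.1 hy.2]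
          apply ENNReal.ofReal_le_ofReal
          linarith [(abs_le.mp (hosc y hy)).1]
  have hfin : ∫⁻ y, kap e x n y ∂Qinf ≠ ⊤ := ne_top_of_le_ne_top ENNReal.ofReal_ne_top hup
  have r1 := ENNReal.toReal_le_of_le_ofReal (by positivity) hup
  have r2 := (ENNReal.ofReal_le_iff_le_toReal hfin).mp hlo
  rw [h1, h2, abs_le]
  constructor <;> linarith
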